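/- arXiv:math/0401246 — 6 statements merged into one kernel-verified Lean document; each statement's English description precedes it below -/
import Mathlib

section
/- Given modular data (I, 0, *, N, s), the subfield L of ℂ generated over ℚ by all the entries s_{ij} is a finite Galois extension of ℚ whose Galois group Gal(L/ℚ) is abelian. -/
open scoped BigOperators

/-- Modular data: a fusion ring given by structure constants `N` on a finite index set
`I` with unit index `one` and duality involution `star`, together with a complex
S-matrix `s` which is symmetric, compatible with duality, has nonvanishing first row,
squares to the duality permutation, satisfies the Verlinde formula, and whose column
ratios exhaust the characters of the fusion ring. -/
structure ModularData (I : Type) [Fintype I] [DecidableEq I] where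
  one : I
  star : I → I
  N : I → I → I → ℕ
  s : I → I → ℂ
  star_involutive : Function.Involutive star
  star_one : star one = one
  assoc : ∀ i j l m, ∑ k, N i j k * N k l m = ∑ k, N j l k * N i k m
  one_mul' : ∀ i j, N one i j = (if i = j then 1 else 0)
  mul_one' : ∀ i j, N i one j = (if i = j then 1 else 0)
  dual : ∀ i j, N i j one = (if j = star i then 1 else 0)
  s_symm : ∀ i j, s i j = s j i
  s_star : ∀ i j, s i j = s (star i) (star j)
  s_one_ne_zero : ∀ i, s one i ≠ 0
  s_mul_s : ∀ i j, ∑ k, s i k * s k j = (if j = star i then 1 else 0)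
  verlinde : ∀ i j r, s one r * ∑ k, (N i j k : ℂ) * s k r = s i r * s j r
  char_column : ∀ f : I → ℂ, f one = 1 →
    (∀ i j, f i * f j = ∑ k, (N i j k : ℂ) * f k) →
    ∃ j, ∀ i, f i = s i j / s one j

/-!
Write `L` for the field generated by the entries and `χ_j i = s i j / s 0 j`. By the Verlinde
relation each `χ_j` is a character of the fusion ring, so its values are algebraic integers, and
`∑ i, χ_j i * χ_j i* = 1 / (s 0 j)²` shows that `s 0 j`, hence every entry, is algebraic.

An embedding `φ : L → ℂ` carries characters to characters, so `φ ∘ χ_j = χ_k` for some `k`.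
Applying `φ` to the sum formula gives `φ (s 0 j)² = (s 0 k)²`, and therefore
`φ (s i j) = ε j * s i (p j)` for some `p : I → I` and signs `ε j = ±1`. In particular `φ` maps `L`
into itself, and `L` is normal.

Since `s` is symmetric, an automorphism may be made to act on the row index instead of the column
index. If `σ` acts on rows and `τ` on columns then they visibly commute on the entries.
-/

open IntermediateField

section General

lemma isIntegral_of_mul_eq_sum {R A ι : Type*} [CommRing R] [Ring A] [Algebra R A] [Fintype ι]
    {f : ι → A} {e : ι} (he : f e = 1) {c : ι → ι → ι → R}
    (hf : ∀ i j, f i * f j = ∑ k, c i j k • f k) (i : ι) : IsIntegral R (f i) := by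
  have mem_span (j : ι) : f j ∈ Submodule.span R (Set.range f) :=
    Submodule.subset_span (Set.mem_range_self j)
  have span_mul_span_le :
      Submodule.span R (Set.range f) * Submodule.span R (Set.range f) ≤
        Submodule.span R (Set.range f) := by
    rw [Submodule.span_mul_span, Submodule.span_le]
    rintro _ ⟨_, ⟨j, rfl⟩, _, ⟨l, rfl⟩, rfl⟩
    change f j * f l ∈ Submodule.span R (Set.range f)
    rw [hf]
    exact Submodule.sum_mem _ fun k _ => Submodule.smul_mem _ _ (mem_span k)
  exact IsIntegral.of_mem_of_fg
    ((Submodule.span R (Set.range f)).toSubalgebra (he ▸ mem_span e) fun _ _ hx hy =>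
      span_mul_span_le (Submodule.mul_mem_mul hx hy))
    (Submodule.fg_span (Set.finite_range f)) _ (mem_span i)

lemma apply_apply_comm_of_row_of_column {ι κ E Φ : Type*} [AddCommGroup E] [FunLike Φ E E]
    [AddMonoidHomClass Φ E E] {a : ι → κ → E} {σ τ : Φ} {p : ι → ι} {q : κ → κ} {ε : ι → ℤˣ}
    {δ : κ → ℤˣ} (hσ : ∀ i j, σ (a i j) = ε i • a (p i) j)
    (hτ : ∀ i j, τ (a i j) = δ j • a i (q j)) (i : ι) (j : κ) :
    σ (τ (a i j)) = τ (σ (a i j)) := by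
  simp only [hσ, hτ, map_zsmul_unit, smul_comm (ε i)]

variable {F Ω : Type*} [Field F] [Field Ω] [Algebra F Ω]

lemma fieldRange_adjoin_le_of_forall_mem {S : Set Ω} {E : Type*} [Field E] [Algebra F E]
    {K : IntermediateField F E} (φ : adjoin F S →ₐ[F] E)
    (hφ : ∀ x (hx : x ∈ S), φ ⟨x, subset_adjoin F S hx⟩ ∈ K) : φ.fieldRange ≤ K := by
  have adjoin_le_lift : adjoin F S ≤ lift (K.comap φ) :=
    adjoin_le_iff.mpr fun x hx => ⟨⟨x, subset_adjoin F S hx⟩, hφ x hx, rfl⟩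
  rintro _ ⟨x, rfl⟩
  exact (mem_lift x).mp (adjoin_le_lift x.2)

lemma normal_of_forall_fieldRange_le [IsAlgClosed Ω] {K : IntermediateField F Ω}
    [Algebra.IsAlgebraic F K] (hK : ∀ φ : K →ₐ[F] Ω, φ.fieldRange ≤ K) : Normal F K := by
  have normalClosure_eq : normalClosure F K Ω = K :=
    (normalClosure_le_iff.mpr hK).antisymm K.le_normalClosure
  have isNormalClosure : IsNormalClosure F K (normalClosure F K Ω) :=
    Algebra.IsAlgebraic.isNormalClosure_normalClosure fun _ => IsAlgClosed.splits _
  have := isNormalClosure.normal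
  exact .of_algEquiv (equivOfEq normalClosure_eq)

end General

namespace ModularData

variable {I : Type} [Fintype I] [DecidableEq I] (M : ModularData I)

/-- `f` is a character of the fusion ring with values in `A`: the function on basis elements
underlying a unital ring homomorphism from the fusion ring to `A`. -/
structure IsCharacter {A : Type*} [Semiring A] (f : I → A) : Prop where
  map_one : f M.one = 1
  map_mul : ∀ i j, f i * f j = ∑ k, (M.N i j k : A) * f k

/-- The `j`-th column of the S-matrix normalized to take the value `1` at the unit, as a function
of the row index `i`. -/
noncomputable def columnRatio (j i : I) : ℂ := M.s i j / M.s M.one j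

variable {M} in
lemma IsCharacter.isIntegral {A : Type*} [Ring A] {f : I → A} (hf : M.IsCharacter f) (i : I) :
    IsIntegral ℤ (f i) :=
  isIntegral_of_mul_eq_sum (c := fun i j k => (M.N i j k : ℤ)) hf.map_one
    (fun i j => by simpa using hf.map_mul i j) i

lemma isCharacter_comp_iff {A B : Type*} [Semiring A] [Semiring B] {φ : A →+* B}
    (hφ : Function.Injective φ) {f : I → A} : M.IsCharacter (φ ∘ f) ↔ M.IsCharacter f := by
  have map_one_iff : (φ ∘ f) M.one = 1 ↔ f M.one = 1 := map_eq_one_iff φ hφ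
  have map_mul_iff (i j : I) : (φ ∘ f) i * (φ ∘ f) j = ∑ k, (M.N i j k : B) * (φ ∘ f) k ↔
      f i * f j = ∑ k, (M.N i j k : A) * f k := by
    simp [← hφ.eq_iff]
  exact ⟨fun h => ⟨map_one_iff.mp h.map_one, fun i j => (map_mul_iff i j).mp (h.map_mul i j)⟩,
    fun h => ⟨map_one_iff.mpr h.map_one, fun i j => (map_mul_iff i j).mpr (h.map_mul i j)⟩⟩

lemma isCharacter_columnRatio (j : I) : M.IsCharacter (M.columnRatio j) where
  map_one := div_self (M.s_one_ne_zero j)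
  map_mul a b := by
    simp only [columnRatio]
    rw [div_mul_div_comm, ← M.verlinde, mul_div_mul_left _ _ (M.s_one_ne_zero j), Finset.sum_div]
    simp only [mul_div_assoc]

variable {M} in
lemma IsCharacter.exists_eq_columnRatio {f : I → ℂ} (hf : M.IsCharacter f) :
    ∃ j, f = M.columnRatio j :=
  (M.char_column f hf.map_one hf.map_mul).imp fun _ => funext

lemma sum_s_mul_s_star (j : I) : ∑ i, M.s i j * M.s (M.star i) j = 1 := by
  calc ∑ i, M.s i j * M.s (M.star i) j = ∑ i, M.s j i * M.s i (M.star j) := by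
        refine Finset.sum_congr rfl fun i _ => ?_
        rw [M.s_symm i j, M.s_star (M.star i) j, M.star_involutive i]
    _ = 1 := by rw [M.s_mul_s, if_pos rfl]

lemma sum_columnRatio_mul_columnRatio_star (j : I) :
    ∑ i, M.columnRatio j i * M.columnRatio j (M.star i) = (M.s M.one j ^ 2)⁻¹ := by
  simp only [columnRatio, div_mul_div_comm, ← Finset.sum_div, M.sum_s_mul_s_star, one_div, sq]

lemma isIntegral_s_one (j : I) : IsIntegral ℚ (M.s M.one j) := by
  have isIntegral_columnRatio (i : I) : IsIntegral ℚ (M.columnRatio j i) :=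
    ((M.isCharacter_columnRatio j).isIntegral i).tower_top
  have isIntegral_inv_sq : IsIntegral ℚ (M.s M.one j ^ 2)⁻¹ := by
    rw [← M.sum_columnRatio_mul_columnRatio_star]
    exact IsIntegral.sum _ fun i _ =>
      (isIntegral_columnRatio i).mul (isIntegral_columnRatio (M.star i))
  exact .of_pow two_pos (inv_inv (M.s M.one j ^ 2) ▸ isIntegral_inv_sq.inv)

lemma isIntegral_s (i j : I) : IsIntegral ℚ (M.s i j) := by
  rw [← div_mul_cancel₀ (M.s i j) (M.s_one_ne_zero j)]
  exact ((M.isCharacter_columnRatio j).isIntegral i).tower_top.mul (M.isIntegral_s_one j)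

/-- The field generated over `ℚ` by the entries of the S-matrix. -/
noncomputable abbrev entryField : IntermediateField ℚ ℂ :=
  adjoin ℚ (Set.range fun p : I × I => M.s p.1 p.2)

/-- The S-matrix with entries regarded as elements of `entryField`. -/
noncomputable def entry (i j : I) : M.entryField :=
  ⟨M.s i j, subset_adjoin ℚ _ ⟨(i, j), rfl⟩⟩

lemma entry_symm (i j : I) : M.entry i j = M.entry j i := Subtype.ext (M.s_symm i j)

lemma finiteDimensional_entryField : FiniteDimensional ℚ M.entryField :=
  finiteDimensional_adjoin (Set.forall_mem_range.mpr fun p => M.isIntegral_s p.1 p.2)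

variable {M} in
lemma algEquiv_ext_entry {σ τ : Gal(M.entryField/ℚ)}
    (h : ∀ i j, σ (M.entry i j) = τ (M.entry i j)) : σ = τ := by
  suffices (σ : M.entryField →ₐ[ℚ] M.entryField) = τ from AlgEquiv.coe_toAlgHom_injective this
  refine adjoin_algHom_ext ℚ ?_
  rintro _ ⟨⟨i, j⟩, rfl⟩
  exact h i j

section Embedding

variable (φ : M.entryField →+* ℂ)

lemma exists_map_entry_div_eq_columnRatio (j : I) :
    ∃ k, ∀ i, φ (M.entry i j) / φ (M.entry M.one j) = M.columnRatio k i := by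
  have isCharacter_entry : M.IsCharacter fun i => M.entry i j / M.entry M.one j :=
    (M.isCharacter_comp_iff (algebraMap M.entryField ℂ).injective).mp (M.isCharacter_columnRatio j)
  obtain ⟨k, hk⟩ :=
    ((M.isCharacter_comp_iff φ.injective).mpr isCharacter_entry).exists_eq_columnRatio
  exact ⟨k, fun i => by rw [← hk, Function.comp_apply, map_div₀]⟩

variable {M φ} in
lemma sq_map_entry_one {j k : I}
    (hk : ∀ i, φ (M.entry i j) / φ (M.entry M.one j) = M.columnRatio k i) :
    φ (M.entry M.one j) ^ 2 = M.s M.one k ^ 2 := by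
  have sum_entry : ∑ i, M.entry i j * M.entry (M.star i) j = 1 := by
    apply Subtype.ext
    push_cast
    exact M.sum_s_mul_s_star j
  rw [← inv_inj, ← M.sum_columnRatio_mul_columnRatio_star k]
  simp only [← hk, div_mul_div_comm, ← Finset.sum_div, ← map_mul, ← map_sum, sum_entry, map_one,
    one_div, sq]

lemma exists_map_entry_eq_smul_s :
    ∃ (p : I → I) (ε : I → ℤˣ), ∀ i j, φ (M.entry i j) = ε j • M.s i (p j) := by
  suffices ∀ j, ∃ (k : I) (ε : ℤˣ), ∀ i, φ (M.entry i j) = ε • M.s i k by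
    choose p ε h using this
    exact ⟨p, ε, fun i j => h j i⟩
  intro j
  obtain ⟨k, hk⟩ := M.exists_map_entry_div_eq_columnRatio φ j
  obtain ⟨ε, hε⟩ : ∃ ε : ℤˣ, φ (M.entry M.one j) = ε • M.s M.one k := by
    rcases sq_eq_sq_iff_eq_or_eq_neg.mp (sq_map_entry_one hk) with h | h
    · exact ⟨1, by rw [h, one_smul]⟩
    · exact ⟨-1, by rw [h, Units.neg_smul, one_smul]⟩
  have hne : φ (M.entry M.one j) ≠ 0 :=
    (map_ne_zero φ).mpr fun h => M.s_one_ne_zero j (congrArg Subtype.val h)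
  refine ⟨k, ε, fun i => ?_⟩
  rw [(div_eq_iff hne).mp (hk i), hε, mul_smul_comm, columnRatio,
    div_mul_cancel₀ _ (M.s_one_ne_zero k)]

end Embedding

lemma fieldRange_le_entryField (φ : M.entryField →ₐ[ℚ] ℂ) : φ.fieldRange ≤ M.entryField := by
  obtain ⟨p, ε, hφ⟩ := M.exists_map_entry_eq_smul_s φ
  refine fieldRange_adjoin_le_of_forall_mem φ ?_
  rintro _ ⟨⟨i, j⟩, rfl⟩
  exact (hφ i j).symm ▸ zsmul_mem (M.entry i (p j)).2 (ε j : ℤ)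

lemma isGalois_entryField : IsGalois ℚ M.entryField :=
  have := M.finiteDimensional_entryField
  have : Normal ℚ M.entryField := normal_of_forall_fieldRange_le M.fieldRange_le_entryField
  ⟨⟩

lemma exists_algEquiv_entry_eq_smul_column (σ : Gal(M.entryField/ℚ)) :
    ∃ (p : I → I) (ε : I → ℤˣ), ∀ i j, σ (M.entry i j) = ε j • M.entry i (p j) := by
  obtain ⟨p, ε, hσ⟩ :=
    M.exists_map_entry_eq_smul_s ((algebraMap M.entryField ℂ).comp (σ : M.entryField →+* _))
  exact ⟨p, ε, fun i j => Subtype.ext (hσ i j)⟩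

lemma exists_algEquiv_entry_eq_smul_row (σ : Gal(M.entryField/ℚ)) :
    ∃ (p : I → I) (ε : I → ℤˣ), ∀ i j, σ (M.entry i j) = ε i • M.entry (p i) j := by
  obtain ⟨p, ε, hσ⟩ := M.exists_algEquiv_entry_eq_smul_column σ
  exact ⟨p, ε, fun i j => by rw [M.entry_symm i j, hσ, M.entry_symm]⟩

lemma algEquiv_entryField_mul_comm (σ τ : Gal(M.entryField/ℚ)) : σ * τ = τ * σ := by
  obtain ⟨p, ε, hσ⟩ := M.exists_algEquiv_entry_eq_smul_row σ
  obtain ⟨q, δ, hτ⟩ := M.exists_algEquiv_entry_eq_smul_column τ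
  exact algEquiv_ext_entry (apply_apply_comm_of_row_of_column hσ hτ)

end ModularData

/-- The subfield `L` of `ℂ` generated over `ℚ` by all entries of the S-matrix of modular
data is a finite Galois extension of `ℚ` with abelian Galois group. -/
theorem smatrix_field_abelian_galois {I : Type} [Fintype I] [DecidableEq I]
    (M : ModularData I) :
    FiniteDimensional ℚ
        (IntermediateField.adjoin ℚ (Set.range fun p : I × I => M.s p.1 p.2)) ∧
      IsGalois ℚ
        (IntermediateField.adjoin ℚ (Set.range fun p : I × I => M.s p.1 p.2)) ∧
      ∀ σ τ : (IntermediateField.adjoin ℚ (Set.range fun p : I × I => M.s p.1 p.2)) ≃ₐ[ℚ]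
          (IntermediateField.adjoin ℚ (Set.range fun p : I × I => M.s p.1 p.2)),
        σ * τ = τ * σ := by
  exact ⟨M.finiteDimensional_entryField, M.isGalois_entryField, M.algEquiv_entryField_mul_comm⟩
end

section
/- The categories of finite-dimensional complex representations of the dihedral group D₈ of order 8 and of the quaternion group Q₈ of order 8 are not equivalent as tensor categories: there is no equivalence of categories between FDRep(ℂ, D₈) and FDRep(ℂ, Q₈) whose underlying functor admits a monoidal structure (even though the two categories have isomorphic Grothendieck rings). -/
open CategoryTheory

/-!
Let `X` be an object whose only endomorphisms are scalars, with a self-duality given by an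
evaluation `X ⊗ X ⟶ 𝟙` and a coevaluation `𝟙 ⟶ X ⊗ X`. In a category of representations the
evaluation is an invariant bilinear form `B`, and comparing `B` with its flip gives `B.flip = ν B`
with `ν = ±1`. The loop, i.e. the coevaluation followed by the evaluation, is `ν * dim X`. Hence
having scalar endomorphisms and a self-duality with loop `2` is a monoidally invariant condition,
which says that `X` is two-dimensional and carries a nondegenerate invariant *symmetric* form.

The plane on which `D₈` acts by the symmetries of a square is such an object. There is none for
`Q₈`: if the central element `-1` acts by `-1`, then `i` and `j` act by skew-adjoint maps, and
skew-adjoint maps for a symmetric form in dimension two commute, so that `-1 = i j i⁻¹ j⁻¹` acts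
trivially. If `-1` acts trivially, the action is commutative, and scalar endomorphisms force
dimension at most one.
-/

open Module MonoidalCategory Functor.LaxMonoidal Functor.OplaxMonoidal
open scoped TensorProduct Matrix

section MonoidalInvariants

variable {C D : Type*} [Category* C] [Category* D] [MonoidalCategory C] [MonoidalCategory D]

/-- Every endomorphism of `X` is a scalar. The scalars are the endomorphisms of the unit object, so
that the notion is transported by monoidal functors that need not be linear. -/
def HasScalarEnd (X : C) : Prop :=
  ∀ f : X ⟶ X, ∃ c : 𝟙_ C ⟶ 𝟙_ C, f = (λ_ X).inv ≫ c ▷ X ≫ (λ_ X).hom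

theorem HasScalarEnd.map (F : C ⥤ D) [F.Full] [F.Monoidal] {X : C} (h : HasScalarEnd X) :
    HasScalarEnd (F.obj X) := by
  intro f
  obtain ⟨f, rfl⟩ := F.map_surjective f
  obtain ⟨c, rfl⟩ := h f
  refine ⟨ε F ≫ F.map c ≫ η F, ?_⟩
  simp only [Functor.map_comp, Functor.Monoidal.map_leftUnitor,
    Functor.Monoidal.map_leftUnitor_inv, Functor.Monoidal.map_whiskerRight, comp_whiskerRight,
    Category.assoc, Functor.Monoidal.μ_δ_assoc]

/-- The image of an exact pairing under a monoidal functor. -/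
abbrev mapExactPairing (F : C ⥤ D) [F.Monoidal] (X Y : C) [ExactPairing X Y] :
    ExactPairing (F.obj X) (F.obj Y) where
  coevaluation' := ε F ≫ F.map (η_ X Y) ≫ δ F X Y
  evaluation' := μ F Y X ≫ F.map (ε_ X Y) ≫ η F
  coevaluation_evaluation' :=
    calc
      _ = F.obj Y ◁ ε F ≫ μ F _ _ ≫ F.map (Y ◁ η_ X Y ≫ (α_ Y X Y).inv ≫ ε_ X Y ▷ Y) ≫
          δ F _ _ ≫ η F ▷ F.obj Y := by
        simp only [Functor.map_comp, Functor.Monoidal.map_whiskerLeft,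
          Functor.Monoidal.map_whiskerRight, Functor.Monoidal.map_associator_inv,
          whiskerLeft_comp, comp_whiskerRight, Category.assoc, Functor.Monoidal.μ_δ_assoc]
      _ = (ρ_ (F.obj Y)).hom ≫ (λ_ (F.obj Y)).inv := by
        rw [ExactPairing.coevaluation_evaluation]
        simp
  evaluation_coevaluation' :=
    calc
      _ = ε F ▷ F.obj X ≫ μ F _ _ ≫ F.map (η_ X Y ▷ X ≫ (α_ X Y X).hom ≫ X ◁ ε_ X Y) ≫
          δ F _ _ ≫ F.obj X ◁ η F := by
        simp only [Functor.map_comp, Functor.Monoidal.map_whiskerLeft,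
          Functor.Monoidal.map_whiskerRight, Functor.Monoidal.map_associator,
          whiskerLeft_comp, comp_whiskerRight, Category.assoc, Functor.Monoidal.μ_δ_assoc]
      _ = (λ_ (F.obj X)).hom ≫ (ρ_ (F.obj X)).inv := by
        rw [ExactPairing.evaluation_coevaluation]
        simp

variable [Preadditive C] [Preadditive D]

/-- `X` is its own dual, by an exact pairing whose loop is the natural number `n`. The loop is the
coevaluation followed by the evaluation with no braiding in between, so it detects whether the
pairing is symmetric or antisymmetric. -/
def IsSelfDualWithLoop (n : ℕ) (X : C) : Prop :=
  ∃ _ : ExactPairing X X, η_ X X ≫ ε_ X X = n • 𝟙 (𝟙_ C)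

theorem IsSelfDualWithLoop.map (F : C ⥤ D) [F.Additive] [F.Monoidal] {n : ℕ} {X : C}
    (h : IsSelfDualWithLoop n X) : IsSelfDualWithLoop n (F.obj X) := by
  obtain ⟨_, hloop⟩ := h
  refine ⟨mapExactPairing F X X, ?_⟩
  calc
    _ = ε F ≫ F.map (η_ X X ≫ ε_ X X) ≫ η F := by
      change (ε F ≫ F.map (η_ X X) ≫ δ F X X) ≫ μ F X X ≫ F.map (ε_ X X) ≫ η F = _
      simp
    _ = n • 𝟙 (𝟙_ D) := by simp [hloop]

end MonoidalInvariants

section Copairing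

variable {k V : Type*} [CommRing k] [AddCommGroup V] [Module k V] {B : LinearMap.BilinForm k V}
  {t : V ⊗[k] V}

/-- The tensor `t = ∑ xᵢ ⊗ yᵢ` is inverse to the bilinear form `B`, in the sense that
`∑ B(w, xᵢ) yᵢ = w` for all `w`. -/
def IsCopairing (B : LinearMap.BilinForm k V) (t : V ⊗[k] V) : Prop :=
  dualTensorHom k V V (B.flip.rTensor V t) = LinearMap.id

theorem isCopairing_iff :
    IsCopairing B t ↔ ∀ w, TensorProduct.lid k V ((B w).rTensor V t) = w := by
  have hcontract (w : V) : dualTensorHom k V V (B.flip.rTensor V t) w =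
      TensorProduct.lid k V ((B w).rTensor V t) := by
    induction t with
    | zero => simp
    | tmul x y => simp
    | add s t hs ht => simp only [map_add, LinearMap.add_apply, hs, ht]
  simp only [IsCopairing, LinearMap.ext_iff, hcontract, LinearMap.id_apply]

theorem IsCopairing.lift_flip_eq_finrank [Module.Free k V] [Module.Finite k V]
    (h : IsCopairing B t) : TensorProduct.lift B.flip t = (finrank k V : k) := by
  have hcontract : contractLeft k V ∘ₗ B.flip.rTensor V = TensorProduct.lift B.flip :=
    TensorProduct.ext' fun x y => by simp
  rw [← hcontract, LinearMap.comp_apply, ← LinearMap.trace_eq_contract_apply, h,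
    LinearMap.trace_id]

theorem rTensor_lift_assoc_symm (w : V) (t : V ⊗[k] V) :
    (TensorProduct.lift B).rTensor V ((TensorProduct.assoc k V V V).symm (w ⊗ₜ t)) =
      (B w).rTensor V t := by
  induction t with
  | zero => simp
  | tmul x y => rfl
  | add s t hs ht => simp only [map_add, TensorProduct.tmul_add, hs, ht]

theorem lTensor_lift_assoc (w : V) (t : V ⊗[k] V) :
    (TensorProduct.lift B).lTensor V (TensorProduct.assoc k V V V (t ⊗ₜ w)) =
      TensorProduct.comm k k V ((B.flip w).rTensor V (TensorProduct.comm k V V t)) := by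
  induction t with
  | zero => simp
  | tmul x y => rfl
  | add s t hs ht => simp only [map_add, TensorProduct.add_tmul, hs, ht]

end Copairing

section Form

variable {k V : Type*} [Field k] [AddCommGroup V] [Module k V] {B : LinearMap.BilinForm k V}
  {t : V ⊗[k] V}

theorem IsCopairing.nondegenerate [FiniteDimensional k V] (h : IsCopairing B t) :
    B.Nondegenerate := by
  refine LinearMap.BilinForm.Nondegenerate.ofSeparatingLeft fun w hw => ?_
  have hBw : B w = 0 := LinearMap.ext hw
  rw [← isCopairing_iff.mp h w, hBw]
  simp

theorem existsUnique_isCopairing [FiniteDimensional k V] (hB : B.Nondegenerate) :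
    ∃! t, IsCopairing B t :=
  ((B.flip.toDual (LinearMap.BilinForm.nondegenerate_flip_iff.mpr hB)).rTensor V ≪≫ₗ
    dualTensorHomEquiv k V V).bijective.existsUnique LinearMap.id

theorem IsCopairing.comm_flip [FiniteDimensional k V] (h : IsCopairing B t) :
    IsCopairing B.flip (TensorProduct.comm k V V t) := by
  refine isCopairing_iff.mpr fun v => ?_
  have hassoc (w : V) (s : V ⊗[k] V) :
      B w (TensorProduct.lid k V ((B.flip v).rTensor V (TensorProduct.comm k V V s))) =
        B (TensorProduct.lid k V ((B w).rTensor V s)) v := by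
    induction s with
    | zero => simp
    | tmul x y => simp [mul_comm]
    | add s s' hs hs' => simp only [map_add, LinearMap.add_apply, hs, hs']
  refine LinearMap.ker_eq_bot.mp h.nondegenerate.flip.ker_eq_bot (LinearMap.ext fun w => ?_)
  rw [LinearMap.BilinForm.flip_apply, hassoc, isCopairing_iff.mp h, LinearMap.BilinForm.flip_apply]

theorem flip_eq_or_flip_eq_neg_of_flip_eq_smul {c : k} (hc : B.flip = c • B) :
    B.flip = B ∨ B.flip = -B := by
  have hflip (x y : V) : B y x = c * B x y := LinearMap.congr_fun₂ hc x y
  have h : (c * c - 1) • B = 0 := LinearMap.ext₂ fun x y => by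
    simp [sub_mul, mul_assoc, ← hflip]
  rcases smul_eq_zero.mp h with hcc | rfl
  · rcases mul_self_eq_one_iff.mp (sub_eq_zero.mp hcc) with rfl | rfl
    · exact .inl (hc.trans (one_smul k B))
    · exact .inr (hc.trans (neg_one_smul k B))
  · exact .inl rfl

theorem eq_zero_of_isAlt_of_apply_eq_zero {R M : Type*} [CommRing R] [AddCommGroup M] [Module R M]
    {B : LinearMap.BilinForm R M} (hB : B.IsAlt) (b : Basis (Fin 2) R M) (h : B (b 0) (b 1) = 0) :
    B = 0 := by
  have h' : B (b 1) (b 0) = 0 := by rw [← hB.neg_eq, h, neg_zero]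
  refine LinearMap.BilinForm.ext_basis b fun i j => ?_
  fin_cases i <;> fin_cases j <;> simp [hB.self_eq_zero, h, h']

theorem exists_eq_smul_of_isAlt (hV : finrank k V = 2) {A A' : LinearMap.BilinForm k V}
    (hA : A.IsAlt) (hA' : A'.IsAlt) (hA0 : A ≠ 0) : ∃ c : k, A' = c • A := by
  have : FiniteDimensional k V := FiniteDimensional.of_finrank_pos (by lia)
  let b := finBasisOfFinrankEq k V hV
  have hb : A (b 0) (b 1) ≠ 0 := fun h => hA0 (eq_zero_of_isAlt_of_apply_eq_zero hA b h)
  refine ⟨A' (b 0) (b 1) / A (b 0) (b 1), sub_eq_zero.mp ?_⟩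
  refine eq_zero_of_isAlt_of_apply_eq_zero (hA'.sub (hA.smul _)) b ?_
  simp [hb]

variable [NeZero (2 : k)] {f g : End k V}

theorem isAlt_comp_of_isSkewAdjoint (hB : B.IsSymm) (hf : B.IsSkewAdjoint f) :
    (B ∘ₗ f).IsAlt := by
  intro x
  have h : B (f x) x = -B (f x) x := by simpa [hB.eq] using hf x x
  have h2 : (2 : k) * B (f x) x = 0 := by linear_combination h
  simpa [NeZero.ne] using h2

-- Both `B (f x) y` and `B (g x) y` are alternating, hence proportional in dimension two.
theorem commute_of_isSkewAdjoint (hV : finrank k V = 2) (hB : B.IsSymm) (hnd : B.Nondegenerate)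
    (hf : B.IsSkewAdjoint f) (hg : B.IsSkewAdjoint g) : Commute f g := by
  have hinj : Function.Injective B := LinearMap.ker_eq_bot.mp hnd.ker_eq_bot
  by_cases hf0 : f = 0
  · rw [hf0]
    exact Commute.zero_left g
  have hBf : B ∘ₗ f ≠ 0 := fun h =>
    hf0 ((LinearMap.cancel_left hinj).mp (h.trans B.comp_zero.symm))
  obtain ⟨c, hc⟩ := exists_eq_smul_of_isAlt hV (isAlt_comp_of_isSkewAdjoint hB hf)
    (isAlt_comp_of_isSkewAdjoint hB hg) hBf
  have hg_eq : g = c • f := (LinearMap.cancel_left hinj).mp (hc.trans (B.comp_smul c f).symm)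
  rw [hg_eq]
  exact (Commute.refl f).smul_right c

end Form

section InvariantForm

variable {k V G : Type*} [CommRing k] [AddCommGroup V] [Module k V] [Group G]

/-- The only endomorphisms commuting with the action are the scalars. Over an algebraically closed
field every finite-dimensional irreducible representation has this property. -/
def HasScalarCommutant (ρ : Representation k G V) : Prop :=
  ∀ f : End k V, (∀ g, Commute (ρ g) f) → ∃ c : k, f = c • 1

/-- The bilinear form `B` is invariant under the representation `ρ`. -/
def IsInvariantForm (ρ : Representation k G V) (B : LinearMap.BilinForm k V) : Prop :=
  ∀ g x y, B (ρ g x) (ρ g y) = B x y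

variable {ρ : Representation k G V} {B : LinearMap.BilinForm k V}

theorem IsInvariantForm.apply_left (hinv : IsInvariantForm ρ B) (g : G) (x y : V) :
    B (ρ g x) y = B x (ρ g⁻¹ y) := by
  rw [← hinv g x (ρ g⁻¹ y), Representation.self_inv_apply]

theorem IsInvariantForm.isSkewAdjoint (hinv : IsInvariantForm ρ B) {g : G}
    (hg : ρ (g * g) = -1) : B.IsSkewAdjoint (ρ g) := by
  intro x y
  rw [← hinv g x, Pi.neg_apply, map_neg, ← End.mul_apply (ρ g), ← map_mul, hg]
  simp

end InvariantForm

section ScalarCommutant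

variable {k V G : Type*} [Field k] [AddCommGroup V] [Module k V] [Group G]
  {ρ : Representation k G V} {B : LinearMap.BilinForm k V} {t : V ⊗[k] V}

theorem IsInvariantForm.tprod_apply_eq [FiniteDimensional k V] (hinv : IsInvariantForm ρ B)
    (ht : IsCopairing B t) (g : G) : ρ.tprod ρ g t = t := by
  refine (existsUnique_isCopairing ht.nondegenerate).unique (isCopairing_iff.mpr fun w => ?_) ht
  have htransport (s : V ⊗[k] V) : TensorProduct.lid k V ((B w).rTensor V (ρ.tprod ρ g s)) =
      ρ g (TensorProduct.lid k V ((B (ρ g⁻¹ w)).rTensor V s)) := by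
    induction s with
    | zero => simp
    | tmul x y => simp [hinv.apply_left]
    | add s s' hs hs' => simp only [map_add, hs, hs']
  rw [htransport, isCopairing_iff.mp ht, Representation.self_inv_apply]

theorem HasScalarCommutant.finrank_le_one_of_commute [FiniteDimensional k V]
    (hρ : HasScalarCommutant ρ) (hcomm : ∀ g h, Commute (ρ g) (ρ h)) : finrank k V ≤ 1 := by
  have hscalar (f : End k V) : ∃ c : k, f = c • 1 := by
    refine hρ f fun g => ?_
    obtain ⟨c, hc⟩ := hρ (ρ g) fun h => hcomm h g
    rw [hc]
    exact (Commute.one_left f).smul_left c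
  have hEnd : finrank k (End k V) ≤ 1 :=
    finrank_le_one 1 fun f => (hscalar f).imp fun _ => Eq.symm
  rw [finrank_linearMap] at hEnd
  nlinarith

theorem HasScalarCommutant.apply_eq_one_or_eq_neg_one (hρ : HasScalarCommutant ρ) {z : G}
    (hz : ∀ g, Commute g z) (hzz : z * z = 1) : ρ z = 1 ∨ ρ z = -1 := by
  obtain ⟨c, hc⟩ := hρ (ρ z) fun g => (hz g).map ρ
  have hsq : (c * c - 1) • (1 : End k V) = 0 := by
    have h : ρ z * ρ z = 1 := by rw [← map_mul, hzz, map_one]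
    rw [hc] at h
    simpa [sub_smul, smul_smul, sub_eq_zero] using h
  rcases smul_eq_zero.mp hsq with hcc | hzero
  · rcases mul_self_eq_one_iff.mp (sub_eq_zero.mp hcc) with rfl | rfl
    · exact .inl (hc.trans (one_smul k _))
    · exact .inr (hc.trans (neg_one_smul k _))
  · exact .inl (by rw [hc, hzero, smul_zero])

-- The operator `A` with `B (A x) y = B y x` commutes with the action, so it is a scalar.
theorem HasScalarCommutant.exists_flip_eq_smul [FiniteDimensional k V]
    (hρ : HasScalarCommutant ρ) (hinv : IsInvariantForm ρ B) (hB : B.Nondegenerate) :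
    ∃ c : k, B.flip = c • B := by
  let A : End k V := B.flip.symmCompOfNondegenerate B hB
  have hA (x y : V) : B (A x) y = B y x := B.flip.symmCompOfNondegenerate_left_apply hB y x
  have hcomm (g : G) : Commute (ρ g) A := LinearMap.ext fun x =>
    LinearMap.ker_eq_bot.mp hB.ker_eq_bot <| LinearMap.ext fun y => by
      rw [End.mul_apply, End.mul_apply, hinv.apply_left, hA, hA, hinv.apply_left, inv_inv]
  obtain ⟨c, hc⟩ := hρ A hcomm
  refine ⟨c, LinearMap.ext₂ fun x y => ?_⟩
  rw [LinearMap.BilinForm.flip_apply, ← hA, hc]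
  simp

theorem HasScalarCommutant.isSymm_and_finrank_eq [CharZero k] [FiniteDimensional k V]
    (hρ : HasScalarCommutant ρ) (hinv : IsInvariantForm ρ B) (ht : IsCopairing B t) {n : ℕ}
    (hloop : TensorProduct.lift B t = n) : B.IsSymm ∧ finrank k V = n := by
  obtain ⟨c, hc⟩ := hρ.exists_flip_eq_smul hinv ht.nondegenerate
  have hdim := ht.lift_flip_eq_finrank
  rcases flip_eq_or_flip_eq_neg_of_flip_eq_smul hc with hflip | hflip
  · rw [hflip, hloop] at hdim
    exact ⟨⟨fun x y => LinearMap.congr_fun₂ hflip y x⟩, (Nat.cast_injective hdim).symm⟩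
  · have hneg : TensorProduct.lift (-B) = -TensorProduct.lift B :=
      TensorProduct.ext' fun x y => by simp
    rw [hflip, hneg, LinearMap.neg_apply, hloop] at hdim
    have hsum : ((finrank k V + n : ℕ) : k) = 0 := by
      push_cast
      linear_combination -hdim
    obtain ⟨hV, hn⟩ := Nat.add_eq_zero_iff.mp (Nat.cast_eq_zero.mp hsum)
    have := finrank_zero_iff.mp hV
    exact ⟨⟨fun x y => by rw [Subsingleton.elim x y]⟩, hV.trans hn.symm⟩

end ScalarCommutant

section FDRep

universe u v

variable {k : Type u} {G : Type v} [Field k] [Group G]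

section Pairing

variable (X : FDRep k G)

theorem hasScalarEnd_iff_hasScalarCommutant : HasScalarEnd X ↔ HasScalarCommutant X.ρ := by
  constructor
  · intro h f hf
    obtain ⟨c, hc⟩ := h ⟨FGModuleCat.ofHom f, fun g => FGModuleCat.hom_ext (hf g).symm⟩
    refine ⟨(c.hom.hom.hom (1 : k) : k), LinearMap.ext fun x => ?_⟩
    exact congrArg (fun f : X ⟶ X => f.hom.hom.hom x) hc
  · intro h f
    obtain ⟨c, hc⟩ := h f.hom.hom.hom fun g =>
      congrArg (fun f : X.V ⟶ X.V => f.hom.hom) (f.comm g).symm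
    have hf : f = c • 𝟙 X := Action.hom_ext _ _ (FGModuleCat.hom_ext hc)
    refine ⟨c • 𝟙 _, ?_⟩
    rw [hf]
    simp

variable [ExactPairing X X]

/-- The evaluation of a self-duality, as a bilinear form on the underlying vector space. -/
noncomputable def evaluationForm : LinearMap.BilinForm k X :=
  TensorProduct.curry ((ε_ X X).hom.hom.hom : X ⊗[k] X →ₗ[k] k)

/-- The coevaluation of a self-duality, as a tensor on the underlying vector space. -/
noncomputable def coevaluationTensor : X ⊗[k] X :=
  (η_ X X).hom.hom.hom (1 : k)

theorem lift_evaluationForm :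
    TensorProduct.lift (evaluationForm X) = ((ε_ X X).hom.hom.hom : X ⊗[k] X →ₗ[k] k) :=
  TensorProduct.ext' fun _ _ => rfl

theorem isInvariantForm_evaluationForm : IsInvariantForm X.ρ (evaluationForm X) := fun g x y =>
  congrArg (fun f : (X ⊗ X).V ⟶ (𝟙_ (FDRep k G)).V => f.hom.hom (x ⊗ₜ[k] y : X ⊗[k] X))
    ((ε_ X X).comm g)

theorem isCopairing_evaluationForm_coevaluationTensor :
    IsCopairing (evaluationForm X) (coevaluationTensor X) := by
  have hzigzag := congrArg Action.Hom.hom (ExactPairing.coevaluation_evaluation X X)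
  simp only [Action.comp_hom, Action.whiskerLeft_hom, Action.whiskerRight_hom,
    Action.associator_inv_hom, Action.leftUnitor_inv_hom, Action.rightUnitor_hom_hom] at hzigzag
  refine isCopairing_iff.mpr fun w => ?_
  have hw : ((ε_ X X).hom.hom.hom : X ⊗[k] X →ₗ[k] k).rTensor X
      ((TensorProduct.assoc k X X X).symm (w ⊗ₜ coevaluationTensor X)) =
        (TensorProduct.lid k X).symm (TensorProduct.rid k X (w ⊗ₜ (1 : k))) :=
    congrArg (fun f : X.V ⊗ 𝟙_ (FGModuleCat k) ⟶ 𝟙_ (FGModuleCat k) ⊗ X.V =>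
      f.hom.hom (w ⊗ₜ[k] (1 : k) : X ⊗[k] k)) hzigzag
  rw [← rTensor_lift_assoc_symm, lift_evaluationForm, hw]
  simp

theorem lift_evaluationForm_coevaluationTensor {n : ℕ}
    (hloop : η_ X X ≫ ε_ X X = n • 𝟙 (𝟙_ (FDRep k G))) :
    TensorProduct.lift (evaluationForm X) (coevaluationTensor X) = n := by
  have hone : ((ε_ X X).hom.hom.hom : X ⊗[k] X →ₗ[k] k) (coevaluationTensor X) = n • (1 : k) :=
    congrArg (fun f : 𝟙_ (FDRep k G) ⟶ 𝟙_ (FDRep k G) => (f.hom.hom.hom (1 : k) : k)) hloop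
  rw [lift_evaluationForm, hone, nsmul_one]

end Pairing

variable {V : Type u} [AddCommGroup V] [Module k V] [FiniteDimensional k V]
  {ρ : Representation k G V} {B : LinearMap.BilinForm k V} {t : V ⊗[k] V}

/-- The morphism `V ⊗ V ⟶ 𝟙` given by an invariant bilinear form. -/
noncomputable def invariantFormHom (hinv : IsInvariantForm ρ B) :
    FDRep.of ρ ⊗ FDRep.of ρ ⟶ 𝟙_ (FDRep k G) where
  hom := FGModuleCat.ofHom (TensorProduct.lift B)
  comm g := FGModuleCat.hom_ext (TensorProduct.ext' (hinv g))

/-- The morphism `𝟙 ⟶ V ⊗ V` sending `1` to an invariant tensor. -/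
noncomputable def invariantTensorHom (ht : ∀ g, ρ.tprod ρ g t = t) :
    𝟙_ (FDRep k G) ⟶ FDRep.of ρ ⊗ FDRep.of ρ where
  hom := FGModuleCat.ofHom (LinearMap.toSpanSingleton k _ t)
  comm g := FGModuleCat.hom_ext <| LinearMap.ext_ring (R := k) <|
    show (1 : k) • t = ρ.tprod ρ g ((1 : k) • t) by rw [one_smul, ht]

/-- The self-duality of a representation given by an invariant form and a tensor inverse to it. -/
noncomputable abbrev exactPairingOfIsCopairing (hinv : IsInvariantForm ρ B)
    (ht : IsCopairing B t) : ExactPairing (FDRep.of ρ) (FDRep.of ρ) where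
  evaluation' := invariantFormHom hinv
  coevaluation' := invariantTensorHom (hinv.tprod_apply_eq ht)
  coevaluation_evaluation' := by
    apply Action.hom_ext
    simp only [Action.comp_hom, Action.whiskerLeft_hom, Action.whiskerRight_hom,
      Action.associator_inv_hom, Action.leftUnitor_inv_hom, Action.rightUnitor_hom_hom]
    refine FGModuleCat.hom_ext <| TensorProduct.ext <| LinearMap.ext fun w =>
      LinearMap.ext_ring (R := k) ?_
    change (TensorProduct.lift B).rTensor V ((TensorProduct.assoc k V V V).symm
      (w ⊗ₜ ((1 : k) • t))) = (TensorProduct.lid k V).symm (TensorProduct.rid k V (w ⊗ₜ (1 : k)))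
    rw [LinearEquiv.eq_symm_apply, one_smul, rTensor_lift_assoc_symm, isCopairing_iff.mp ht,
      TensorProduct.rid_tmul, one_smul]
  evaluation_coevaluation' := by
    apply Action.hom_ext
    simp only [Action.comp_hom, Action.whiskerLeft_hom, Action.whiskerRight_hom,
      Action.associator_hom_hom, Action.leftUnitor_hom_hom, Action.rightUnitor_inv_hom]
    refine FGModuleCat.hom_ext <| TensorProduct.ext <| LinearMap.ext_ring (R := k) <|
      LinearMap.ext fun w => ?_
    change (TensorProduct.lift B).lTensor V (TensorProduct.assoc k V V V (((1 : k) • t) ⊗ₜ w)) =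
      (TensorProduct.rid k V).symm (TensorProduct.lid k V ((1 : k) ⊗ₜ w))
    rw [LinearEquiv.eq_symm_apply, one_smul, lTensor_lift_assoc, ← TensorProduct.lid_comm,
      TensorProduct.comm_comm, isCopairing_iff.mp ht.comm_flip, TensorProduct.lid_tmul, one_smul]

theorem isSelfDualWithLoop_of_isSymm (hinv : IsInvariantForm ρ B) (hB : B.Nondegenerate)
    (hsymm : B.IsSymm) : IsSelfDualWithLoop (finrank k V) (FDRep.of ρ) := by
  obtain ⟨t, ht⟩ := (existsUnique_isCopairing hB).exists
  have hflip : B.flip = B := LinearMap.BilinForm.isSymm_iff_flip.mp hsymm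
  have hloop : TensorProduct.lift B t = finrank k V := by
    rw [← ht.lift_flip_eq_finrank, hflip]
  refine ⟨exactPairingOfIsCopairing hinv ht, ?_⟩
  refine Action.hom_ext _ _ (FGModuleCat.hom_ext <| LinearMap.ext_ring (R := k) ?_)
  change TensorProduct.lift B ((1 : k) • t) = finrank k V • (1 : k)
  rw [one_smul, hloop, nsmul_one]

end FDRep

section Quaternion

open QuaternionGroup

theorem commute_a_two (g : QuaternionGroup 2) : Commute g (a 2) := by
  revert g
  unfold Commute SemiconjBy
  decide

theorem mul_eq_or_mul_eq_a_two_mul (g h : QuaternionGroup 2) :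
    g * h = h * g ∨ g * h = a 2 * (h * g) := by
  revert g h
  decide

variable {k V : Type*} [Field k] [NeZero (2 : k)] [AddCommGroup V] [Module k V]
  {ρ : Representation k (QuaternionGroup 2) V} {B : LinearMap.BilinForm k V}

-- In the usual notation `a 2 = -1`, `a 1 = i` and `xa 0 = j`.
theorem apply_a_two_ne_neg_one (hV : finrank k V = 2) (hinv : IsInvariantForm ρ B)
    (hsymm : B.IsSymm) (hB : B.Nondegenerate) : ρ (a 2) ≠ -1 := by
  intro hneg
  have hij : Commute (ρ (a 1)) (ρ (xa 0)) := commute_of_isSkewAdjoint hV hsymm hB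
    (hinv.isSkewAdjoint hneg) (hinv.isSkewAdjoint hneg)
  have hone : ρ (a 2) = 1 :=
    calc ρ (a 2) = ρ (a 1) * ρ (xa 0) * ρ (xa 0 * a 1)⁻¹ := by
          rw [← map_mul, ← map_mul]
          rfl
      _ = 1 := by rw [hij, ← map_mul, ← map_mul, mul_inv_cancel, map_one]
  have : Nontrivial V := nontrivial_of_finrank_pos (R := k) (by lia)
  have h2 : (2 : k) • (1 : End k V) = 0 := by
    rw [two_smul, ← sub_neg_eq_add, ← hneg, hone, sub_self]
  exact smul_ne_zero two_ne_zero one_ne_zero h2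

theorem not_hasScalarCommutant_of_isSymm (hV : finrank k V = 2) (hinv : IsInvariantForm ρ B)
    (hsymm : B.IsSymm) (hB : B.Nondegenerate) : ¬ HasScalarCommutant ρ := by
  intro hρ
  have : FiniteDimensional k V := FiniteDimensional.of_finrank_pos (by lia)
  have hone : ρ (a 2) = 1 := (hρ.apply_eq_one_or_eq_neg_one commute_a_two (by decide)).resolve_right
    (apply_a_two_ne_neg_one hV hinv hsymm hB)
  have hcomm (g h : QuaternionGroup 2) : Commute (ρ g) (ρ h) := by
    rw [Commute, SemiconjBy, ← map_mul, ← map_mul]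
    rcases mul_eq_or_mul_eq_a_two_mul g h with hgh | hgh
    · rw [hgh]
    · rw [hgh, map_mul, hone, one_mul]
  have := hρ.finrank_le_one_of_commute hcomm
  lia

end Quaternion

section Dihedral

theorem mulVec_dotProduct_mulVec_of_transpose_mul_self {n R : Type*} [Fintype n] [DecidableEq n]
    [CommRing R] {M : Matrix n n R} (hM : Mᵀ * M = 1) (x y : n → R) :
    (M *ᵥ x) ⬝ᵥ (M *ᵥ y) = x ⬝ᵥ y := by
  rw [Matrix.dotProduct_mulVec, Matrix.vecMul_mulVec, hM, Matrix.vecMul_one]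

theorem dotProductBilin_nondegenerate {k n : Type*} [Field k] [Fintype n] :
    (dotProductBilin k k : LinearMap.BilinForm k (n → k)).Nondegenerate :=
  LinearMap.BilinForm.Nondegenerate.ofSeparatingLeft fun x hx => dotProduct_eq_zero x hx

theorem isSymm_dotProductBilin {R n : Type*} [CommRing R] [Fintype n] :
    LinearMap.BilinForm.IsSymm (dotProductBilin R R : LinearMap.BilinForm R (n → R)) :=
  ⟨dotProduct_comm⟩

theorem eq_smul_one_of_commute {k : Type*} [Field k] [NeZero (2 : k)]
    {A : Matrix (Fin 2) (Fin 2) k} (hrot : Commute !![0, -1; 1, 0] A)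
    (hrefl : Commute !![1, 0; 0, -1] A) : A = A 0 0 • 1 := by
  have hdiag : A 0 0 = A 1 1 := by simpa [Matrix.mul_apply] using congrFun₂ hrot.eq 1 0
  have hoff : -A 1 0 = A 0 1 := by simpa [Matrix.mul_apply] using congrFun₂ hrot.eq 0 0
  have hneg : A 0 1 = -A 0 1 := by simpa [Matrix.mul_apply] using congrFun₂ hrefl.eq 0 1
  have h01 : A 0 1 = 0 :=
    (mul_eq_zero.mp (by linear_combination hneg : (2 : k) * A 0 1 = 0)).resolve_left two_ne_zero
  have h10 : A 1 0 = 0 := neg_eq_zero.mp (hoff.trans h01)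
  ext i j
  fin_cases i <;> fin_cases j <;> simp [h01, h10, hdiag]

/-- The symmetries of the square as integer matrices: `r 1` is the rotation by a quarter turn and
`sr 0` the reflection in the first coordinate axis. -/
def squareMatrix : DihedralGroup 4 →* Matrix (Fin 2) (Fin 2) ℤ where
  toFun
    | .r i => !![0, -1; 1, 0] ^ i.val
    | .sr i => !![1, 0; 0, -1] * !![0, -1; 1, 0] ^ i.val
  map_one' := by decide
  map_mul' := by decide

theorem squareMatrix_transpose_mul_self (g : DihedralGroup 4) :
    (squareMatrix g)ᵀ * squareMatrix g = 1 := by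
  revert g
  decide

/-- The representation of `D₈` by the symmetries of a square in the plane `k²`. -/
noncomputable def squareRep (k : Type*) [CommRing k] :
    Representation k (DihedralGroup 4) (Fin 2 → k) :=
  (Matrix.toLinAlgEquiv' : Matrix (Fin 2) (Fin 2) k ≃ₐ[k] _).toRingEquiv.toMonoidHom.comp
    ((Int.castRingHom k).mapMatrix.toMonoidHom.comp squareMatrix)

theorem squareRep_apply {k : Type*} [CommRing k] (g : DihedralGroup 4) :
    squareRep k g = Matrix.toLinAlgEquiv' ((Int.castRingHom k).mapMatrix (squareMatrix g)) :=
  rfl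

theorem squareRep_r_one {k : Type*} [CommRing k] :
    squareRep k (.r 1) = Matrix.toLinAlgEquiv' !![0, -1; 1, 0] := by
  have hr : squareMatrix (.r 1) = !![0, -1; 1, 0] := by decide
  rw [squareRep_apply, hr]
  congr
  ext i j
  fin_cases i <;> fin_cases j <;> simp

theorem squareRep_sr_zero {k : Type*} [CommRing k] :
    squareRep k (.sr 0) = Matrix.toLinAlgEquiv' !![1, 0; 0, -1] := by
  have hsr : squareMatrix (.sr 0) = !![1, 0; 0, -1] := by decide
  rw [squareRep_apply, hsr]
  congr
  ext i j
  fin_cases i <;> fin_cases j <;> simp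

theorem isInvariantForm_squareRep {k : Type*} [CommRing k] :
    IsInvariantForm (squareRep k) (dotProductBilin k k) := by
  intro g x y
  refine mulVec_dotProduct_mulVec_of_transpose_mul_self ?_ x y
  have h := congrArg (Int.castRingHom k).mapMatrix (squareMatrix_transpose_mul_self g)
  rwa [map_mul, map_one] at h

theorem hasScalarCommutant_squareRep {k : Type*} [Field k] [NeZero (2 : k)] :
    HasScalarCommutant (squareRep k) := by
  intro f hf
  have hcomm {g : DihedralGroup 4} {M : Matrix (Fin 2) (Fin 2) k}
      (hM : squareRep k g = Matrix.toLinAlgEquiv' M) :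
      Commute M (LinearMap.toMatrixAlgEquiv' f) := by
    simpa [hM] using (hf g).map LinearMap.toMatrixAlgEquiv'
  refine ⟨LinearMap.toMatrixAlgEquiv' f 0 0, LinearMap.toMatrixAlgEquiv'.injective ?_⟩
  rw [map_smul, map_one]
  exact eq_smul_one_of_commute (hcomm squareRep_r_one) (hcomm squareRep_sr_zero)

end Dihedral

theorem fdRep_D8_not_monoidally_equivalent_fdRep_Q8_general {k : Type*} [Field k] [CharZero k] :
    ¬ ∃ e : FDRep k (DihedralGroup 4) ≌ FDRep k (QuaternionGroup 2),
        Nonempty e.functor.Monoidal := by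
  rintro ⟨e, ⟨_⟩⟩
  have : e.functor.Additive := Functor.additive_of_preserves_binary_products _
  let X : FDRep k (QuaternionGroup 2) := e.functor.obj (FDRep.of (squareRep k))
  have hscalar : HasScalarCommutant X.ρ := (hasScalarEnd_iff_hasScalarCommutant X).mp <|
    ((hasScalarEnd_iff_hasScalarCommutant (FDRep.of (squareRep k))).mpr
      hasScalarCommutant_squareRep).map e.functor
  obtain ⟨_, hloop⟩ : IsSelfDualWithLoop (finrank k (Fin 2 → k)) X :=
    (isSelfDualWithLoop_of_isSymm isInvariantForm_squareRep dotProductBilin_nondegenerate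
      isSymm_dotProductBilin).map e.functor
  have hinv := isInvariantForm_evaluationForm X
  have hcop := isCopairing_evaluationForm_coevaluationTensor X
  obtain ⟨hsymm, hdim⟩ :=
    hscalar.isSymm_and_finrank_eq hinv hcop (lift_evaluationForm_coevaluationTensor X hloop)
  rw [finrank_fin_fun] at hdim
  exact not_hasScalarCommutant_of_isSymm hdim hinv hsymm hcop.nondegenerate hscalar

/-- The tensor categories of finite-dimensional complex representations of the dihedral
group `D₈` of order 8 and of the quaternion group `Q₈` are not tensor equivalent: there
is no equivalence of categories between them whose underlying functor admits a monoidal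
structure (even though they have isomorphic Grothendieck rings). -/
theorem fdRep_D8_not_monoidally_equivalent_fdRep_Q8 :
    ¬ ∃ e : FDRep ℂ (DihedralGroup 4) ≌ FDRep ℂ (QuaternionGroup 2),
        Nonempty e.functor.Monoidal :=
  fdRep_D8_not_monoidally_equivalent_fdRep_Q8_general
end

section
/- Let C be a rigid abelian monoidal category whose unit object 𝟙 is simple and in which every monomorphism splits (semisimplicity). Then for every simple object V of C, the right dual V* is isomorphic to the left dual *V; equivalently, V is isomorphic to its double dual V**. -/
open CategoryTheory CategoryTheory.MonoidalCategory

/-!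
In a semisimple abelian category every morphism `f` has a quasi-inverse `g`, with `fgf = f`, so a
nonzero morphism `A ⟶ B` yields a nonzero morphism `B ⟶ A`. By adjunction
`Hom(V, V) ≅ Hom(𝟙, V ⊗ V*)` and `Hom(V ⊗ V*, 𝟙) ≅ Hom(V, V**)`; the first group is nonzero, hence
so is the last. Since right duals of simple objects are simple, by Schur's lemma a nonzero morphism
`V ⟶ V**` is an isomorphism. Then `V*` and `*V` are both left duals of `V`.
-/

open Limits

section Splitting

variable {C : Type*} [Category C]

theorem splitEpiCategory_of_splitMonoCategory [Abelian C] [SplitMonoCategory C] :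
    SplitEpiCategory C where
  isSplitEpi_of_epi {X Y} p _ := by
    let S := ShortComplex.mk (kernel.ι p) p (kernel.condition p)
    have : IsSplitMono S.f := isSplitMono_of_mono (kernel.ι p)
    have hS : S.Exact := S.exact_of_f_is_kernel (kernelIsKernel p)
    let σ := ShortComplex.Splitting.ofExactOfRetraction S hS (retraction S.f)
      (IsSplitMono.id S.f) inferInstance
    exact .mk' ⟨σ.s, σ.s_g⟩

theorem exists_comp_comp_eq_self [HasImages C] [HasStrongEpiImages C] [SplitMonoCategory C]
    [SplitEpiCategory C] {A B : C} (f : A ⟶ B) : ∃ g : B ⟶ A, f ≫ g ≫ f = f := by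
  have := isSplitEpi_of_epi (factorThruImage f)
  have := isSplitMono_of_mono (image.ι f)
  let p := factorThruImage f
  let m := image.ι f
  have fac : p ≫ m = f := image.fac f
  refine ⟨retraction m ≫ section_ p, ?_⟩
  calc f ≫ (retraction m ≫ section_ p) ≫ f
    _ = p ≫ (m ≫ retraction m) ≫ (section_ p ≫ p) ≫ m := by simp only [← fac, Category.assoc]
    _ = f := by rw [IsSplitMono.id, IsSplitEpi.id, Category.id_comp, Category.id_comp, fac]

theorem exists_reverse_hom_ne_zero [Abelian C] [SplitMonoCategory C] {A B : C} {f : A ⟶ B}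
    (hf : f ≠ 0) : ∃ g : B ⟶ A, g ≠ 0 := by
  have : SplitEpiCategory C := splitEpiCategory_of_splitMonoCategory
  obtain ⟨g, hg⟩ := exists_comp_comp_eq_self f
  refine ⟨g, ?_⟩
  rintro rfl
  exact hf (by simpa using hg.symm)

theorem eq_id_of_idempotent_of_ne_zero [Preadditive C] [HasKernels C] {X : C} [Simple X]
    {e : X ⟶ X} (he : e ≫ e = e) (he₀ : e ≠ 0) : e = 𝟙 X := by
  have := isIso_of_hom_simple he₀
  rw [← cancel_epi e, he, Category.comp_id]

end Splitting

section ZeroMorphisms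

variable {C : Type*} [Category C] [MonoidalCategory C] [HasZeroMorphisms C]

theorem whiskerLeft_zero_of_exactPairing (X Y : C) [ExactPairing X Y] {A B : C} :
    X ◁ (0 : A ⟶ B) = 0 :=
  have := (tensorLeftAdjunction X Y).isRightAdjoint
  (tensorLeft X).map_zero A B

theorem zero_whiskerRight_of_exactPairing (X Y : C) [ExactPairing X Y] {A B : C} :
    (0 : A ⟶ B) ▷ X = 0 :=
  have := (tensorRightAdjunction X Y).isLeftAdjoint
  (tensorRight X).map_zero A B

theorem tensorRightHomEquiv_eq_zero_iff {X Y A B : C} [ExactPairing X Y] {f : A ⊗ X ⟶ B} :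
    tensorRightHomEquiv A X Y B f = 0 ↔ f = 0 := by
  have symm_zero : (tensorRightHomEquiv A X Y B).symm 0 = 0 := by
    simp [tensorRightHomEquiv, zero_whiskerRight_of_exactPairing X Y]
  rw [← Equiv.eq_symm_apply, symm_zero]

theorem leftAdjointMate_zero {X Y : C} [HasLeftDual X] [HasLeftDual Y] :
    (ᘁ(0 : X ⟶ Y)) = 0 := by
  simp [leftAdjointMate, whiskerLeft_zero_of_exactPairing (ᘁX) X,
    zero_whiskerRight_of_exactPairing (ᘁY) Y]

end ZeroMorphisms

section Duals

variable {C : Type*} [Category C] [MonoidalCategory C]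

theorem leftAdjointMate_injective {X Y : C} [HasLeftDual X] [HasLeftDual Y] :
    Function.Injective (fun f : X ⟶ Y => (ᘁf)) := by
  intro f g hfg
  -- A morphism and its mate are transposes of the same pairing `X ⊗ ᘁY ⟶ 𝟙`.
  have pairing_eq : f ▷ (ᘁY) ≫ ε_ (ᘁY) Y = g ▷ (ᘁY) ≫ ε_ (ᘁY) Y := by
    rw [← leftAdjointMate_comp_evaluation, ← leftAdjointMate_comp_evaluation]
    exact congrArg (fun t => X ◁ t ≫ ε_ (ᘁX) X) hfg
  rw [← cancel_mono (λ_ Y).inv]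
  calc f ≫ (λ_ Y).inv
    _ = tensorRightHomEquiv X (ᘁY) Y (𝟙_ C) (f ▷ (ᘁY) ≫ ε_ (ᘁY) Y) :=
        (tensorRightHomEquiv_whiskerRight_comp_evaluation (X := ᘁY) f).symm
    _ = tensorRightHomEquiv X (ᘁY) Y (𝟙_ C) (g ▷ (ᘁY) ≫ ε_ (ᘁY) Y) := by rw [pairing_eq]
    _ = g ≫ (λ_ Y).inv := tensorRightHomEquiv_whiskerRight_comp_evaluation (X := ᘁY) g

theorem leftAdjointMate_eq_zero_iff [HasZeroMorphisms C] {X Y : C} [HasLeftDual X] [HasLeftDual Y]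
    {f : X ⟶ Y} : (ᘁf) = 0 ↔ f = 0 := by
  rw [← leftAdjointMate_zero]
  exact leftAdjointMate_injective.eq_iff

theorem leftAdjointMate_eq_id_iff {X : C} [HasLeftDual X] {f : X ⟶ X} :
    (ᘁf) = 𝟙 (ᘁX) ↔ f = 𝟙 X := by
  rw [← leftAdjointMate_id]
  exact leftAdjointMate_injective.eq_iff

variable [SplitMonoCategory C]

-- A subobject of `Y` need not have a left dual, but the idempotent of `Y` splitting it off has a
-- mate.
theorem simple_of_simple_leftDual [Preadditive C] [HasKernels C] (Y : C) [HasLeftDual Y]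
    [Simple (ᘁY)] : Simple Y where
  mono_isIso_iff_nonzero {A} i _ := by
    constructor
    · rintro _ rfl
      have id_eq_zero : 𝟙 Y = 0 := by rw [← IsIso.inv_hom_id (0 : A ⟶ Y), comp_zero]
      exact id_nonzero (ᘁY) (by rw [← leftAdjointMate_id, id_eq_zero, leftAdjointMate_zero])
    · intro hi
      have := isSplitMono_of_mono i
      let e := retraction i ≫ i
      have i_comp_e : i ≫ e = i := IsSplitMono.id_assoc i i
      have e_ne_zero : e ≠ 0 := fun h => hi (by rw [← i_comp_e, h, comp_zero])
      have mate_idem : (ᘁe) ≫ (ᘁe) = (ᘁe) := by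
        rw [← comp_leftAdjointMate, Category.assoc, i_comp_e]
      have e_eq_id : e = 𝟙 Y := leftAdjointMate_eq_id_iff.mp <|
        eq_id_of_idempotent_of_ne_zero mate_idem (leftAdjointMate_eq_zero_iff.not.mpr e_ne_zero)
      exact ⟨retraction i, IsSplitMono.id i, e_eq_id⟩

theorem simple_rightDual [Preadditive C] [HasKernels C] (X : C) [HasRightDual X] [Simple X] :
    Simple (Xᘁ) :=
  have : Simple (ᘁ(Xᘁ)) := ‹Simple X›
  simple_of_simple_leftDual (Xᘁ)

variable [Abelian C]

theorem exists_hom_rightDual_rightDual_ne_zero (X : C) [HasRightDual X] [HasRightDual (Xᘁ)]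
    (hX : ¬ IsZero X) : ∃ f : X ⟶ (Xᘁ)ᘁ, f ≠ 0 := by
  have unitor_ne_zero : (λ_ X).hom ≠ 0 := fun h =>
    hX ((IsZero.iff_id_eq_zero X).mpr (by rw [← (λ_ X).inv_hom_id, h, comp_zero]))
  obtain ⟨t, ht⟩ : ∃ t : X ⊗ Xᘁ ⟶ 𝟙_ C, t ≠ 0 :=
    exists_reverse_hom_ne_zero ((tensorRightHomEquiv_eq_zero_iff (Y := Xᘁ)).not.mpr unitor_ne_zero)
  refine ⟨tensorRightHomEquiv X (Xᘁ) ((Xᘁ)ᘁ) (𝟙_ C) t ≫ (λ_ ((Xᘁ)ᘁ)).hom, ?_⟩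
  rwa [ne_eq, Preadditive.IsIso.comp_right_eq_zero, tensorRightHomEquiv_eq_zero_iff]

theorem nonempty_rightDual_rightDual_iso (V : C) [Simple V] [HasRightDual V]
    [HasRightDual (Vᘁ)] : Nonempty ((Vᘁ)ᘁ ≅ V) := by
  have := simple_rightDual V
  have := simple_rightDual (Vᘁ)
  obtain ⟨f, hf⟩ := exists_hom_rightDual_rightDual_ne_zero V (Simple.not_isZero V)
  have := isIso_of_hom_simple hf
  exact ⟨(asIso f).symm⟩

end Duals

theorem right_dual_iso_left_dual_of_semisimple_general {C : Type*} [Category C] [Abelian C]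
    [MonoidalCategory C] [SplitMonoCategory C] (V : C) [Simple V] [HasLeftDual V]
    [HasRightDual V] [HasRightDual (Vᘁ)] :
    Nonempty ((Vᘁ) ≅ (ᘁV)) ∧ Nonempty (((Vᘁ)ᘁ) ≅ V) := by
  obtain ⟨i⟩ := nonempty_rightDual_rightDual_iso V
  exact ⟨⟨leftDualIso (exactPairingCongrRight i.symm) HasLeftDual.exact⟩, ⟨i⟩⟩

/-- In a semisimple rigid abelian monoidal category with simple unit (semisimplicity
being expressed by the condition that every monomorphism splits), every simple object
`V` has its right dual isomorphic to its left dual; equivalently, `V` is isomorphic to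
its double dual. -/
theorem right_dual_iso_left_dual_of_semisimple (C : Type*) [Category C] [Abelian C]
    [MonoidalCategory C] [RigidCategory C] [Simple (𝟙_ C)]
    (hsplit : ∀ (X Y : C) (f : X ⟶ Y), Mono f → ∃ r : Y ⟶ X, f ≫ r = 𝟙 X)
    (V : C) [Simple V] :
    Nonempty ((Vᘁ) ≅ (ᘁV)) ∧ Nonempty (((Vᘁ)ᘁ) ≅ V) := by
  have : SplitMonoCategory C :=
    ⟨fun f hf => let ⟨r, hr⟩ := hsplit _ _ f hf; .mk' ⟨r, hr⟩⟩
  exact right_dual_iso_left_dual_of_semisimple_general V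
end

section
/- For every prime p, the second group cohomology group H²(ℤ/p × ℤ/p, ℂˣ), with ℤ/p × ℤ/p acting trivially on the multiplicative group ℂˣ, has exactly p elements (it is cyclic of order p). -/
/-!
For a 2-cocycle `f` on an abelian group `G` with trivial coefficients `A`, the difference
`f (g, h) - f (h, g)` is the commutator of lifts of `g` and `h` to the extension of `G` by `A`
defined by `f`. It is biadditive and alternating, and it vanishes on coboundaries. If it vanishes
identically, the extension is abelian, and it splits when `A` is divisible, hence injective; so for
divisible `A` the coboundaries are exactly the cocycles with zero commutator pairing.

An alternating pairing on `ℤ/m × ℤ/n` is determined by its value `z` at the two generators. This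
value is killed by `m` and by `n`, and any `z` killed by `gcd m n` comes from the biadditive cocycle
`((x, y), (x', y')) ↦ x y' z`. Hence `H²(ℤ/m × ℤ/n, A)` is the `gcd m n`-torsion of `A`, which for
the units of an algebraically closed field is a group of roots of unity.
-/

open groupCohomology

universe u

section Group

variable {k G : Type u} [CommRing k] [Group G] {A : Rep.{u} k G}

/-- A linear map whose kernel consists of the coboundaries identifies `H²` with its range. -/
noncomputable def H2EquivRange {M : Type*} [AddCommGroup M] [Module k M]
    (φ : cocycles₂ A →ₗ[k] M) (hφ : ∀ f, φ f = 0 ↔ ⇑f ∈ coboundaries₂ A) :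
    H2 A ≃ₗ[k] LinearMap.range φ :=
  have hsurj : Function.Surjective (H2π A).hom := (ModuleCat.epi_iff_surjective _).1 inferInstance
  have hker : LinearMap.ker (H2π A).hom = LinearMap.ker φ :=
    Submodule.ext fun f => (H2π_eq_zero_iff f).trans (hφ f).symm
  ((H2π A).hom.quotKerEquivOfSurjective hsurj).symm ≪≫ₗ
    Submodule.quotEquivOfEq _ _ hker ≪≫ₗ φ.quotKerEquivRange

/-- The central extension of `G` by the trivial representation `A` defined by a 2-cocycle `f`: the
set `A × G` with the group law `(x, g) + (y, h) = (x + y + f (g, h), g * h)`, written additively. -/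
@[ext]
structure CocycleExtension (f : cocycles₂ A) where
  /-- The coordinate in the kernel `A`. -/
  fst : A
  /-- The projection to the quotient `G`. -/
  snd : G

namespace CocycleExtension

variable {f : cocycles₂ A}

instance : Add (CocycleExtension f) :=
  ⟨fun x y => ⟨x.fst + y.fst + f (x.snd, y.snd), x.snd * y.snd⟩⟩

-- The cocycle need not be normalized, so `(0, 1)` is not neutral in general.
instance : Zero (CocycleExtension f) := ⟨⟨-f (1, 1), 1⟩⟩

instance : Neg (CocycleExtension f) :=
  ⟨fun x => ⟨-x.fst - f (x.snd⁻¹, x.snd) - f (1, 1), x.snd⁻¹⟩⟩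

@[simp]
theorem fst_add (x y : CocycleExtension f) : (x + y).fst = x.fst + y.fst + f (x.snd, y.snd) := rfl

@[simp]
theorem snd_add (x y : CocycleExtension f) : (x + y).snd = x.snd * y.snd := rfl

@[simp]
theorem fst_zero : (0 : CocycleExtension f).fst = -f (1, 1) := rfl

@[simp]
theorem snd_zero : (0 : CocycleExtension f).snd = 1 := rfl

@[simp]
theorem fst_neg (x : CocycleExtension f) :
    (-x).fst = -x.fst - f (x.snd⁻¹, x.snd) - f (1, 1) := rfl

@[simp]
theorem snd_neg (x : CocycleExtension f) : (-x).snd = x.snd⁻¹ := rfl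

end CocycleExtension

variable [A.IsTrivial]

theorem cocycle_map_mul_add (f : cocycles₂ A) (g h j : G) :
    f (g * h, j) + f (g, h) = f (h, j) + f (g, h * j) := by
  simpa using (mem_cocycles₂_iff f).1 f.2 g h j

theorem mem_coboundaries₂_iff_of_isTrivial (f : cocycles₂ A) :
    ⇑f ∈ coboundaries₂ A ↔ ∃ x : G → A, ∀ g h, f (g, h) = x h - x (g * h) + x g := by
  constructor
  · rintro ⟨x, hx⟩
    exact ⟨x, fun g h => by simpa using (congrFun hx (g, h)).symm⟩
  · rintro ⟨x, hx⟩
    exact ⟨x, funext fun ⟨g, h⟩ => by simpa using (hx g h).symm⟩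

namespace CocycleExtension

variable {f : cocycles₂ A}

instance : AddGroup (CocycleExtension f) :=
  AddGroup.ofLeftAxioms
    (fun x y z => by
      ext
      · have := cocycle_map_mul_add f x.snd y.snd z.snd
        simp only [fst_add, snd_add]
        grind
      · simp [mul_assoc])
    (fun x => by ext <;> simp [cocycles₂_map_one_fst f x.snd])
    (fun x => by
      ext
      · simp only [fst_add, snd_neg, fst_neg, fst_zero]
        abel
      · simp)

variable (f) in
/-- The inclusion of the kernel `A` into the extension. -/
def inl : A →+ CocycleExtension f :=
  AddMonoidHom.mk' (fun a => ⟨a - f (1, 1), 1⟩) fun a b => by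
    ext
    · simp only [fst_add]
      abel
    · simp

theorem inl_injective : Function.Injective (inl f) := fun _ _ hab =>
  sub_left_injective (congrArg fst hab)

theorem mk_zero_add_mk_zero (g h : G) :
    (⟨0, g⟩ + ⟨0, h⟩ : CocycleExtension f) = inl f (f (g, h)) + ⟨0, g * h⟩ := by
  ext <;> simp [inl, cocycles₂_map_one_fst f (g * h)]

/-- A retraction of the extension onto its kernel, restricted to the section `g ↦ (0, g)`, is a
1-cochain whose coboundary is `f`. -/
theorem mem_coboundaries₂_of_retraction (r : CocycleExtension f →+ A)
    (hr : ∀ a, r (inl f a) = a) : ⇑f ∈ coboundaries₂ A := by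
  refine (mem_coboundaries₂_iff_of_isTrivial f).2 ⟨fun g => r ⟨0, g⟩, fun g h => ?_⟩
  have hsum : r ⟨0, g⟩ + r ⟨0, h⟩ = f (g, h) + r ⟨0, g * h⟩ := by
    rw [← map_add, mk_zero_add_mk_zero, map_add, hr]
  grind

end CocycleExtension

end Group

section CommGroup

variable {k G : Type u} [CommRing k] [CommGroup G] {A : Rep.{u} k G} [A.IsTrivial]

/-- The extension defined by a symmetric cocycle on an abelian group is abelian. -/
abbrev CocycleExtension.addCommGroup (f : cocycles₂ A) (hf : ∀ g h, f (g, h) = f (h, g)) :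
    AddCommGroup (CocycleExtension f) where
  add_comm x y := by
    ext
    · simp only [fst_add, hf x.snd, add_comm x.fst]
    · exact mul_comm _ _

theorem mem_coboundaries₂_of_symmetric [DivisibleBy A ℤ] (f : cocycles₂ A)
    (hf : ∀ g h, f (g, h) = f (h, g)) : ⇑f ∈ coboundaries₂ A := by
  let := CocycleExtension.addCommGroup f hf
  obtain ⟨r, hr⟩ := (Module.Baer.of_divisible A).extension_property
    (CocycleExtension.inl f).toIntLinearMap CocycleExtension.inl_injective LinearMap.id
  exact CocycleExtension.mem_coboundaries₂_of_retraction r.toAddMonoidHom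
    fun a => LinearMap.congr_fun hr a

theorem cocycle_sub_swap_mul_left (f : cocycles₂ A) (g h j : G) :
    f (g * h, j) - f (j, g * h) = (f (g, j) - f (j, g)) + (f (h, j) - f (j, h)) := by
  have hghj := cocycle_map_mul_add f g h j
  have hgjh := cocycle_map_mul_add f g j h
  have hjgh := cocycle_map_mul_add f j g h
  rw [mul_comm j h] at hgjh
  rw [mul_comm j g] at hjgh
  grind

variable (A) in
/-- The commutator pairing `(g, h) ↦ f (g, h) - f (h, g)` of a 2-cocycle `f` on an abelian group
with trivial coefficients. -/
def commutatorPairing : cocycles₂ A →ₗ[k] Additive G →+ Additive G →+ A where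
  toFun f := AddMonoidHom.mk'
    (fun g => AddMonoidHom.mk' (fun h => f (g.toMul, h.toMul) - f (h.toMul, g.toMul)) fun h j => by
      rw [← neg_sub, toMul_add, cocycle_sub_swap_mul_left]
      abel)
    fun g h => AddMonoidHom.ext fun j => cocycle_sub_swap_mul_left f g.toMul h.toMul j.toMul
  map_add' f f' := by
    ext g h
    exact add_sub_add_comm _ _ _ _
  map_smul' c f := by
    ext g h
    exact (smul_sub c _ _).symm

theorem commutatorPairing_apply (f : cocycles₂ A) (g h : Additive G) :
    commutatorPairing A f g h = f (g.toMul, h.toMul) - f (h.toMul, g.toMul) := rfl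

theorem commutatorPairing_self (f : cocycles₂ A) (g : Additive G) :
    commutatorPairing A f g g = 0 :=
  sub_self _

theorem commutatorPairing_eq_zero_iff [DivisibleBy A ℤ] (f : cocycles₂ A) :
    commutatorPairing A f = 0 ↔ ⇑f ∈ coboundaries₂ A := by
  constructor
  · intro hf
    exact mem_coboundaries₂_of_symmetric f fun g h =>
      sub_eq_zero.1 (DFunLike.congr_fun (DFunLike.congr_fun hf (.ofMul g)) (.ofMul h))
  · rw [mem_coboundaries₂_iff_of_isTrivial]
    rintro ⟨x, hx⟩
    refine AddMonoidHom.ext fun g => AddMonoidHom.ext fun h => ?_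
    rw [commutatorPairing_apply, hx, hx, mul_comm h.toMul]
    simp only [AddMonoidHom.zero_apply]
    abel

/-- A biadditive map, regarded as a 2-cocycle. -/
def biadditiveCocycle (β : Additive G →+ Additive G →+ A) : cocycles₂ A :=
  ⟨fun g => β (.ofMul g.1) (.ofMul g.2), (mem_cocycles₂_iff _).2 fun g h j => by
    simp only [ofMul_mul, map_add, AddMonoidHom.add_apply, Representation.isTrivial_apply]
    abel⟩

theorem commutatorPairing_biadditiveCocycle (β : Additive G →+ Additive G →+ A)
    (g h : Additive G) : commutatorPairing A (biadditiveCocycle β) g h = β g h - β h g := rfl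

end CommGroup

theorem gcd_nsmul_biadditive_eq_zero {B C D : Type*} [AddMonoid B] [AddMonoid C]
    [AddCommMonoid D] (β : B →+ C →+ D) {m n : ℕ} {b : B} {c : C} (hb : m • b = 0)
    (hc : n • c = 0) : m.gcd n • β b c = 0 := by
  have hm : m • β b c = 0 := by
    rw [← AddMonoidHom.nsmul_apply, ← map_nsmul, hb, map_zero, AddMonoidHom.zero_apply]
  have hn : n • β b c = 0 := by rw [← map_nsmul, hc, map_zero]
  exact addOrderOf_dvd_iff_nsmul_eq_zero.1 <| Nat.dvd_gcd
    (addOrderOf_dvd_of_nsmul_eq_zero hm) (addOrderOf_dvd_of_nsmul_eq_zero hn)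

section Alternating

variable {B C : Type*} [AddGroup B] [AddCommMonoid C] {β : B →+ B →+ C}

theorem biadditive_eq_zero_of_closure {s : Set B} (hs : AddSubgroup.closure s = ⊤)
    (hβ : ∀ x ∈ s, ∀ y ∈ s, β x y = 0) : β = 0 :=
  AddMonoidHom.eq_of_eqOn_dense hs fun x hx => AddMonoidHom.eq_of_eqOn_dense hs (hβ x hx)

theorem alternating_eq_zero_of_closure_pair {a b : B}
    (hab : AddSubgroup.closure {a, b} = ⊤) (hβ : ∀ x, β x x = 0) (h : β a b = 0) : β = 0 := by
  have hba : β b a = 0 := by simpa [hβ, h] using hβ (a + b)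
  refine biadditive_eq_zero_of_closure hab ?_
  rintro x (rfl | rfl) y (rfl | rfl)
  exacts [hβ _, h, hba, hβ _]

end Alternating

theorem closure_zmod_prod_generators (m n : ℕ) :
    AddSubgroup.closure {((1, 0) : ZMod m × ZMod n), (0, 1)} = ⊤ := by
  refine eq_top_iff.2 fun x _ => AddSubgroup.mem_closure_pair.2 ?_
  exact ⟨x.1.cast, x.2.cast, by ext <;> simp⟩

theorem exists_biadditive_zmod_apply_one_one {B : Type*} [AddCommGroup B] {m n : ℕ} {z : B}
    (hz : m.gcd n • z = 0) : ∃ β : ZMod m →+ ZMod n →+ B, β 1 1 = z := by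
  let ψ : {f : ℤ →+ B // f (m.gcd n) = 0} := ⟨zmultiplesHom B z, by simpa using hz⟩
  let φ : ZMod (m.gcd n) →+ B := ZMod.lift _ ψ
  have hφ : φ 1 = z := by simpa [ψ] using ZMod.lift_coe _ ψ 1
  let castₘ : ZMod m →+* ZMod (m.gcd n) := ZMod.castHom (m.gcd_dvd_left n) _
  let castₙ : ZMod n →+* ZMod (m.gcd n) := ZMod.castHom (m.gcd_dvd_right n) _
  refine ⟨((AddMonoidHom.mul.compr₂ φ).comp castₘ.toAddMonoidHom).compl₂ castₙ.toAddMonoidHom, ?_⟩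
  simp [hφ]

section ZMod

variable {k : Type} [CommRing k] {m n : ℕ} (A : Rep.{0} k (Multiplicative (ZMod m × ZMod n)))
  [A.IsTrivial]

/-- The commutator pairing of a 2-cocycle on `ℤ/m × ℤ/n`, evaluated at the standard generators. -/
def generatorPairing : cocycles₂ A →ₗ[k] A where
  toFun f := commutatorPairing A f (.ofMul (.ofAdd (1, 0))) (.ofMul (.ofAdd (0, 1)))
  map_add' f f' := by simp
  map_smul' c f := by simp

variable {A}

theorem generatorPairing_eq_zero_iff [DivisibleBy A ℤ] (f : cocycles₂ A) :
    generatorPairing A f = 0 ↔ ⇑f ∈ coboundaries₂ A := by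
  rw [← commutatorPairing_eq_zero_iff]
  refine ⟨fun hf => ?_, fun hf => ?_⟩
  · exact alternating_eq_zero_of_closure_pair (closure_zmod_prod_generators m n)
      (commutatorPairing_self f) hf
  · change commutatorPairing A f _ _ = 0
    simp [hf]

theorem gcd_nsmul_generatorPairing (f : cocycles₂ A) : m.gcd n • generatorPairing A f = 0 := by
  have hm : m • ((1, 0) : ZMod m × ZMod n) = 0 := by ext <;> simp
  have hn : n • ((0, 1) : ZMod m × ZMod n) = 0 := by ext <;> simp
  exact gcd_nsmul_biadditive_eq_zero (commutatorPairing A f) hm hn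

theorem exists_generatorPairing_eq {z : A} (hz : m.gcd n • z = 0) :
    ∃ f, generatorPairing A f = z := by
  obtain ⟨β, hβ⟩ := exists_biadditive_zmod_apply_one_one hz
  let γ : ZMod m × ZMod n →+ ZMod m × ZMod n →+ A :=
    (β.comp (AddMonoidHom.fst _ _)).compl₂ (AddMonoidHom.snd _ _)
  have hγ : γ (1, 0) (0, 1) - γ (0, 1) (1, 0) = z := by simp [γ, hβ]
  exact ⟨biadditiveCocycle γ, (commutatorPairing_biadditiveCocycle (A := A) γ _ _).trans hγ⟩

theorem range_generatorPairing :
    LinearMap.range (generatorPairing A) = Submodule.torsionBy k A (m.gcd n : k) := by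
  ext z
  rw [Submodule.mem_torsionBy_iff, Nat.cast_smul_eq_nsmul]
  constructor
  · rintro ⟨f, rfl⟩
    exact gcd_nsmul_generatorPairing f
  · exact exists_generatorPairing_eq

variable (A) in
/-- For divisible trivial coefficients, `H²(ℤ/m × ℤ/n, A)` is the `gcd m n`-torsion of `A`. -/
noncomputable def H2EquivTorsionBy [DivisibleBy A ℤ] :
    H2 A ≃ₗ[k] Submodule.torsionBy k A (m.gcd n : k) :=
  H2EquivRange (generatorPairing A) generatorPairing_eq_zero_iff ≪≫ₗ
    LinearEquiv.ofEq _ _ range_generatorPairing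

end ZMod

section Units

variable (K : Type*) [Field K]

noncomputable instance divisibleByAdditiveUnits [IsAlgClosed K] :
    DivisibleBy (Additive Kˣ) ℤ :=
  letI : DivisibleBy (Additive Kˣ) ℕ := divisibleByOfSMulRightSurj _ _ fun {n} hn z => by
    obtain ⟨w, hw⟩ := IsAlgClosed.exists_pow_nat_eq (z.toMul : K) (Nat.pos_of_ne_zero hn)
    have hw0 : w ≠ 0 := by
      rintro rfl
      exact z.toMul.ne_zero (hw.symm.trans (zero_pow hn))
    exact ⟨.ofMul (Units.mk0 w hw0), Additive.toMul.injective (Units.ext hw)⟩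
  AddGroup.divisibleByIntOfDivisibleByNat _

theorem card_torsionBy_additive_units [IsSepClosed K] (d : ℕ) [NeZero (d : K)] :
    Nat.card (Submodule.torsionBy ℤ (Additive Kˣ) (d : ℤ)) = d := by
  have : NeZero d := .of_neZero_natCast K
  refine (Nat.card_congr (Equiv.subtypeEquiv Additive.toMul fun z => ?_)).trans
    (HasEnoughRootsOfUnity.natCard_rootsOfUnity K d)
  rw [Submodule.mem_torsionBy_iff, Nat.cast_smul_eq_nsmul, mem_rootsOfUnity]
  exact Iff.rfl

end Units

theorem card_H2_zmod_p_sq_units_complex_general (K : Type) [Field K] [IsAlgClosed K] (m n : ℕ)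
    [NeZero (m.gcd n : K)] :
    Nat.card (H2 (Rep.trivial ℤ (Multiplicative (ZMod m × ZMod n)) (Additive Kˣ))) = m.gcd n :=
  (Nat.card_congr (H2EquivTorsionBy _).toEquiv).trans (card_torsionBy_additive_units K _)

/-- For every prime `p`, the second group cohomology of `ℤ/p × ℤ/p` with coefficients in
the trivial module `ℂˣ` has exactly `p` elements. -/
theorem card_H2_zmod_p_sq_units_complex (p : ℕ) (hp : p.Prime) :
    Nat.card
      (groupCohomology.H2
        (Rep.trivial ℤ (Multiplicative (ZMod p × ZMod p)) (Additive ℂˣ))) = p := by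
  have : NeZero (p.gcd p : ℂ) := ⟨by simpa using hp.ne_zero⟩
  simpa using card_H2_zmod_p_sq_units_complex_general ℂ p p
end

section
/- No root of the polynomial x³ − x² − 5x + 1 lies in a cyclotomic field: for every complex root of unity ξ (ξⁿ = 1 for some integer n ≥ 1) and every element α of the subfield ℚ(ξ) of ℂ, one has α³ − α² − 5α + 1 ≠ 0. (This polynomial is the minimal polynomial of the Frobenius–Perron dimension d₊(X) of the fusion ring with basis 1, X, Y and relations XY = 2X + Y, X² = 1 + 2Y, Y² = 1 + X + 2Y, whose Galois group is S₃; hence that fusion ring is not realizable by a fusion category.) -/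
/-!
Over a field `F`, let `x` be a root of an irreducible cubic `P` in a cyclotomic extension of `F`.
That extension is abelian, so `F⟮x⟯` is normal over `F` and `P` splits in it; the discriminant of
`P` is therefore the square of an element of `F⟮x⟯`. As `F⟮x⟯` has odd degree 3, taking norms shows
that the discriminant is already a square in `F`. But `x³ - x² - 5x + 1` is irreducible over `ℚ`,
and its discriminant `592 = 2⁴ · 37` is not a rational square.
-/

open Polynomial IntermediateField

lemma isSquare_of_isSquare_pow_of_odd {G : Type*} [CommGroupWithZero G] {a : G} {n : ℕ}
    (hn : Odd n) (h : IsSquare (a ^ n)) : IsSquare a := by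
  obtain ⟨k, rfl⟩ := hn
  rcases eq_or_ne a 0 with rfl | ha
  · exact IsSquare.zero
  · have hdiv : a = a ^ (2 * k + 1) / (a ^ k) ^ 2 := by
      rw [eq_div_iff (pow_ne_zero 2 (pow_ne_zero k ha)), ← pow_mul', ← pow_succ']
    rw [hdiv]
    exact h.div (IsSquare.sq _)

section

variable {F : Type*} [Field F]

lemma isSquare_of_isSquare_algebraMap_of_odd_finrank {A : Type*} [Ring A] [Algebra F A] {a : F}
    (hodd : Odd (Module.finrank F A)) (h : IsSquare (algebraMap F A a)) : IsSquare a := by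
  have hnorm : IsSquare (Algebra.norm F (algebraMap F A a)) := h.map (Algebra.norm F)
  rw [Algebra.norm_algebraMap] at hnorm
  exact isSquare_of_isSquare_pow_of_odd hodd hnorm

lemma isSquare_map_discr_of_splits {K : Type*} [Field K] {φ : F →+* K} {P : Cubic F}
    (ha : P.a ≠ 0) (hP : (P.toPoly.map φ).Splits) : IsSquare (φ P.discr) := by
  obtain ⟨x, y, z, hroots⟩ := (Cubic.splits_iff_roots_eq_three ha).mp hP
  rw [Cubic.discr_eq_prod_three_roots ha hroots]
  exact IsSquare.sq _

variable {E : Type*} [Field E] [Algebra F E]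

lemma isSquare_discr_of_normal_adjoin_root {P : Cubic F} (ha : P.a ≠ 0)
    (hP : Irreducible P.toPoly) {x : E} (hx : aeval x P.toPoly = 0) [Normal F F⟮x⟯] :
    IsSquare P.discr := by
  have hint : IsIntegral F x := isAlgebraic_iff_isIntegral.mp ⟨P.toPoly, hP.ne_zero, hx⟩
  have hassoc : Associated (minpoly F x) P.toPoly :=
    (minpoly.irreducible hint).associated_of_dvd hP (minpoly.dvd F x hx)
  have hrank : Module.finrank F F⟮x⟯ = 3 := by
    rw [adjoin.finrank hint, natDegree_eq_of_degree_eq (degree_eq_degree_of_associated hassoc),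
      Cubic.natDegree_of_a_ne_zero ha]
  have hsplits : (P.toPoly.map (algebraMap F F⟮x⟯)).Splits := by
    have hmin : ((minpoly F x).map (algebraMap F F⟮x⟯)).Splits :=
      minpoly_gen F x ▸ Normal.splits ‹_› (AdjoinSimple.gen F x)
    exact hmin.of_dvd (Polynomial.map_ne_zero (minpoly.ne_zero hint))
      (Polynomial.map_dvd _ hassoc.symm.dvd)
  exact isSquare_of_isSquare_algebraMap_of_odd_finrank (by rw [hrank]; decide)
    (isSquare_map_discr_of_splits ha hsplits)

lemma isAbelianGalois_adjoin_of_isOfFinOrder {ξ : E} (hξ : IsOfFinOrder ξ) :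
    IsAbelianGalois F F⟮ξ⟯ := by
  have : NeZero (orderOf ξ) := .of_pos hξ.orderOf_pos
  have hint : IsIntegral F ξ := ((IsPrimitiveRoot.orderOf ξ).isIntegral hξ.orderOf_pos).tower_top
  have : IsCyclotomicExtension {orderOf ξ} F F⟮ξ⟯ := by
    change IsCyclotomicExtension {orderOf ξ} F F⟮ξ⟯.toSubalgebra
    rw [adjoin_simple_toSubalgebra_of_isAlgebraic hint.isAlgebraic]
    exact (IsPrimitiveRoot.orderOf ξ).adjoin_isCyclotomicExtension F
  exact IsCyclotomicExtension.isAbelianGalois {orderOf ξ} F F⟮ξ⟯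

lemma normal_adjoin_of_mem_isAbelianGalois {K : IntermediateField F E} [IsAbelianGalois F K]
    {x : E} (hx : x ∈ K) : Normal F F⟮x⟯ := by
  have := IsAbelianGalois.of_algHom (inclusion (adjoin_simple_le_iff.mpr hx))
  infer_instance

end

/-- The cubic `x³ - x² - 5x + 1` attached to the fusion ring, with coefficients in an arbitrary ring
so that its irreducibility over `ℤ` can be transferred to `ℚ`. -/
def fusionCubic (R : Type*) [Ring R] : Cubic R := ⟨1, -1, -5, 1⟩

lemma map_fusionCubic {R S : Type*} [Ring R] [Ring S] (φ : R →+* S) :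
    (fusionCubic R).map φ = fusionCubic S := by
  simp [fusionCubic, Cubic.map, map_ofNat]

lemma aeval_toPoly_fusionCubic {R A : Type*} [CommRing R] [Ring A] [Algebra R A] (x : A) :
    aeval x (fusionCubic R).toPoly = x ^ 3 - x ^ 2 - 5 * x + 1 := by
  simp [fusionCubic, Cubic.toPoly, map_ofNat, sub_eq_add_neg]

lemma discr_fusionCubic (R : Type*) [Ring R] : (fusionCubic R).discr = 592 := by
  norm_num [fusionCubic, Cubic.discr]

lemma irreducible_toPoly_fusionCubic_int : Irreducible (fusionCubic ℤ).toPoly := by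
  have hdeg : (fusionCubic ℤ).toPoly.natDegree = 3 := Cubic.natDegree_of_a_ne_zero' one_ne_zero
  have hmonic : (fusionCubic ℤ).toPoly.Monic := Cubic.monic_of_a_eq_one'
  rw [hmonic.irreducible_iff_roots_eq_zero_of_degree_le_three (by omega) (by omega)]
  refine Multiset.eq_zero_of_forall_notMem fun z hz ↦ ?_
  have hroot : z ^ 3 - z ^ 2 - 5 * z + 1 = 0 := by
    rw [← aeval_toPoly_fusionCubic (R := ℤ), coe_aeval_eq_eval]
    exact isRoot_of_mem_roots hz
  have hunit : IsUnit z := .of_mul_eq_one (5 + z - z ^ 2) (by linear_combination -hroot)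
  rcases Int.isUnit_iff.mp hunit with rfl | rfl <;> norm_num at hroot

lemma irreducible_toPoly_fusionCubic_rat : Irreducible (fusionCubic ℚ).toPoly := by
  rw [← map_fusionCubic (algebraMap ℤ ℚ), Cubic.map_toPoly]
  exact (Cubic.monic_of_a_eq_one'.irreducible_iff_irreducible_map_fraction_map).mp
    irreducible_toPoly_fusionCubic_int

theorem cubic_root_not_in_cyclotomic_general {E : Type*} [Field E] [Algebra ℚ E] {ξ α : E}
    (hξ : IsOfFinOrder ξ) (hα : α ∈ ℚ⟮ξ⟯) : α ^ 3 - α ^ 2 - 5 * α + 1 ≠ 0 := by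
  intro hroot
  rw [← aeval_toPoly_fusionCubic (R := ℚ)] at hroot
  have := isAbelianGalois_adjoin_of_isOfFinOrder (F := ℚ) hξ
  have := normal_adjoin_of_mem_isAbelianGalois hα
  have hdiscr : IsSquare (fusionCubic ℚ).discr :=
    isSquare_discr_of_normal_adjoin_root one_ne_zero irreducible_toPoly_fusionCubic_rat hroot
  rw [discr_fusionCubic] at hdiscr
  norm_num at hdiscr

/-- No root of `x³ - x² - 5x + 1` lies in a cyclotomic field: for every root of unity
`ξ ∈ ℂ` and every `α ∈ ℚ(ξ)`, one has `α³ - α² - 5α + 1 ≠ 0`. (This cubic is the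
minimal polynomial of the Frobenius–Perron dimension of a basis element of a fusion
ring whose Galois group is `S₃`; hence that fusion ring is not realizable.) -/
theorem cubic_root_not_in_cyclotomic (ξ : ℂ) (hξ : ∃ n : ℕ, 1 ≤ n ∧ ξ ^ n = 1)
    (α : ℂ) (hα : α ∈ Algebra.adjoin ℚ ({ξ} : Set ℂ)) :
    α ^ 3 - α ^ 2 - 5 * α + 1 ≠ 0 := by
  have hα' : α ∈ ℚ⟮ξ⟯ := algebra_adjoin_le_adjoin ℚ {ξ} hα
  exact cubic_root_not_in_cyclotomic_general (isOfFinOrder_iff_pow_eq_one.mpr hξ) hα'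
end

section
/- (Landau's theorem) For every natural number N there exists a bound B(N) such that every finite group having at most N conjugacy classes (equivalently, at most N isomorphism classes of irreducible complex representations) has order at most B(N); in particular, up to isomorphism there are only finitely many finite groups with at most N irreducible representations. -/
/-!
Dividing the class equation by `|G|` writes `1` as the sum, over the conjugacy classes, of the
inverses of the centralizer orders. A number `q` is a sum of at most `k` unit fractions in only
finitely many ways: some denominator is at most `k / q`, and removing it leaves a sum of at most
`k - 1` unit fractions whose value is one of finitely many. So the number of conjugacy classes
bounds all centralizer orders, and the centralizer of the identity is `G`.
-/

section UnitFractions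

variable {K : Type*} [Field K] [LinearOrder K] [IsStrictOrderedRing K]

-- If all denominators are `0`, then so is the sum, and the right-hand side is `s.card / 0 = 0`.
theorem exists_mem_le_card_div_sum_inv {s : Multiset ℕ} (hs : s ≠ 0) :
    ∃ y ∈ s, (y : K) ≤ s.card / (s.map fun x : ℕ ↦ (x : K)⁻¹).sum := by
  obtain ⟨y, hy, hmax⟩ := s.toFinset.exists_max_image (fun x : ℕ ↦ (x : K)⁻¹) (by simpa)
  simp only [Multiset.mem_toFinset] at hy hmax
  have hterm_nonneg : ∀ a ∈ s.map (fun x : ℕ ↦ (x : K)⁻¹), 0 ≤ a := by simp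
  refine ⟨y, hy, ?_⟩
  rcases y.eq_zero_or_pos with rfl | hypos
  · simpa using div_nonneg s.card.cast_nonneg (Multiset.sum_nonneg hterm_nonneg)
  have hyK : (0 : K) < y := mod_cast hypos
  have hsum_pos : 0 < (s.map fun x : ℕ ↦ (x : K)⁻¹).sum :=
    (inv_pos.2 hyK).trans_le
      (Multiset.single_le_sum hterm_nonneg _ (Multiset.mem_map_of_mem _ hy))
  have hsum_le : (s.map fun x : ℕ ↦ (x : K)⁻¹).sum ≤ s.card * (y : K)⁻¹ := by
    simpa using Multiset.sum_le_card_nsmul (s.map fun x : ℕ ↦ (x : K)⁻¹) _ (by simpa using hmax)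
  rwa [le_div_iff₀' hsum_pos, ← le_div_iff₀ hyK, div_eq_mul_inv]

-- Zero denominators contribute `0⁻¹ = 0`; the bound on the cardinality still limits their number.
theorem finite_setOf_sum_inv_eq [Archimedean K] (k : ℕ) (q : K) :
    {s : Multiset ℕ | s.card ≤ k ∧ (s.map fun x : ℕ ↦ (x : K)⁻¹).sum = q}.Finite := by
  induction k generalizing q with
  | zero => exact (Set.finite_singleton 0).subset fun s hs ↦ by simpa using hs.1
  | succ k ih =>
    obtain ⟨M, hM⟩ := exists_nat_ge ((k + 1 : ℕ) / q)
    refine (((Set.finite_Iic M).biUnion fun y _ ↦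
      (ih (q - (y : K)⁻¹)).image (Multiset.cons y)).insert 0).subset ?_
    rintro s ⟨hcard, rfl⟩
    refine or_iff_not_imp_left.2 fun hs ↦ ?_
    obtain ⟨y, hy, hy_le⟩ := exists_mem_le_card_div_sum_inv (K := K) hs
    have hyM : (y : K) ≤ M := by
      refine (hy_le.trans ?_).trans hM
      gcongr
      exact Multiset.sum_nonneg (by simp)
    obtain ⟨t, rfl⟩ := Multiset.exists_cons_of_mem hy
    exact Set.mem_biUnion (Nat.cast_le.1 hyM) ⟨t, by simpa using hcard, rfl⟩

theorem exists_forall_le_of_sum_inv_eq [Archimedean K] (k : ℕ) (q : K) :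
    ∃ B : ℕ, ∀ s : Multiset ℕ, s.card ≤ k → (s.map fun x : ℕ ↦ (x : K)⁻¹).sum = q →
      ∀ x ∈ s, x ≤ B := by
  obtain ⟨B, hB⟩ :=
    ((finite_setOf_sum_inv_eq k q).biUnion fun s _ ↦ s.finite_toSet).bddAbove
  exact ⟨B, fun s hcard hsum x hx ↦ hB (Set.mem_biUnion ⟨hcard, hsum⟩ hx)⟩

end UnitFractions

section ClassEquation

variable {G : Type*} [Group G]

theorem card_centralizer_mul_ncard_carrier (g : G) :
    Nat.card (Subgroup.centralizer {g}) * (ConjClasses.mk g).carrier.ncard = Nat.card G := by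
  rw [Subgroup.nat_card_centralizer_nat_card_stabilizer, ← ConjAct.orbit_eq_carrier_conjClasses,
    ← MulAction.index_stabilizer, Subgroup.card_mul_index]
  exact Nat.card_congr ConjAct.ofConjAct.toEquiv

theorem inv_card_centralizer_eq_ncard_carrier_div_card [Finite G] {K : Type*} [Field K]
    [CharZero K] (g : G) :
    (Nat.card (Subgroup.centralizer {g}) : K)⁻¹ =
      (ConjClasses.mk g).carrier.ncard / Nat.card G := by
  have hG : (Nat.card G : K) ≠ 0 := mod_cast Nat.card_pos.ne'
  have hmul : (Nat.card (Subgroup.centralizer {g}) : K) * (ConjClasses.mk g).carrier.ncard =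
      Nat.card G := mod_cast card_centralizer_mul_ncard_carrier g
  rw [eq_div_iff hG, ← hmul, inv_mul_cancel_left₀ (left_ne_zero_of_mul (hmul ▸ hG))]

theorem sum_inv_card_centralizer_out_eq_one [Finite G] [Fintype (ConjClasses G)] {K : Type*}
    [Field K] [CharZero K] :
    ∑ c : ConjClasses G, (Nat.card (Subgroup.centralizer {Quotient.out c}) : K)⁻¹ = 1 := by
  have hG : (Nat.card G : K) ≠ 0 := mod_cast Nat.card_pos.ne'
  have hout (c : ConjClasses G) : ConjClasses.mk (Quotient.out c) = c := Quotient.out_eq c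
  have hclass : ∑ c : ConjClasses G, c.carrier.ncard = Nat.card G := by
    rw [← finsum_eq_sum_of_fintype, Group.sum_card_conj_classes_eq_card]
  simp_rw [inv_card_centralizer_eq_ncard_carrier_div_card, hout]
  rw [← Finset.sum_div, ← Nat.cast_sum, hclass, div_self hG]

theorem card_centralizer_out_one :
    Nat.card (Subgroup.centralizer {Quotient.out (1 : ConjClasses G)}) = Nat.card G := by
  have hout : Quotient.out (1 : ConjClasses G) = 1 :=
    isConj_one_left.1 (ConjClasses.mk_eq_mk_iff_isConj.1 (Quotient.out_eq (1 : ConjClasses G)))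
  rw [hout, Subgroup.centralizer_eq_top_iff_subset.2 (by simp), Subgroup.card_top]

end ClassEquation

theorem landau_bound_of_card_conjClasses_general.{u} (N : ℕ) :
    ∃ B : ℕ, ∀ (G : Type u) [Group G] [Finite G],
      Nat.card (ConjClasses G) ≤ N → Nat.card G ≤ B := by
  obtain ⟨B, hB⟩ := exists_forall_le_of_sum_inv_eq N (1 : ℚ)
  refine ⟨B, fun G _ _ hN ↦ ?_⟩
  have := Fintype.ofFinite (ConjClasses G)
  let centralizerOrders : Multiset ℕ := Finset.univ.val.map fun c : ConjClasses G ↦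
    Nat.card (Subgroup.centralizer {Quotient.out c})
  have hcard : centralizerOrders.card ≤ N := by
    simpa [centralizerOrders, Nat.card_eq_fintype_card] using hN
  have hsum : (centralizerOrders.map fun x : ℕ ↦ (x : ℚ)⁻¹).sum = 1 := by
    rw [Multiset.map_map]
    exact sum_inv_card_centralizer_out_eq_one
  have hmem : Nat.card G ∈ centralizerOrders :=
    Multiset.mem_map.2 ⟨1, Finset.mem_univ_val 1, card_centralizer_out_one⟩
  exact hB centralizerOrders hcard hsum _ hmem

/-- (Landau's theorem) For every `N` there is a bound `B` such that every finite group
with at most `N` conjugacy classes (equivalently, at most `N` isomorphism classes of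
irreducible complex representations) has order at most `B`; in particular there are only
finitely many such groups up to isomorphism. -/
theorem landau_bound_of_card_conjClasses (N : ℕ) :
    ∃ B : ℕ, ∀ (G : Type) (_ : Group G) (_ : Finite G),
      Nat.card (ConjClasses G) ≤ N → Nat.card G ≤ B :=
  landau_bound_of_card_conjClasses_general N
end
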